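/- Let V ⊆ ℂ^n be an irreducible variety of dimension d, let 0 ≤ s ≤ n−d be an integer, and let k and m be positive integers satisfying 2s·δ_s(V) ≤ m < δ_{s+1}(V) and c_0·m^{n−s}·Δ_s(V) > k. Then the affine Hilbert function of the ideal of V satisfies H_{I(V)}(m) > k. -/

import Mathlib

open MvPolynomial Set

noncomputable section

namespace Paper

variable (n : ℕ)

/-- The zero locus in `ℂⁿ` of a set of polynomials. -/
def zeroLocus (I : Set (MvPolynomial (Fin n) ℂ)) : Set (Fin n → ℂ) :=
  {x | ∀ f ∈ I, eval x f = 0}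

/-- A subset of `ℂⁿ` is algebraic if it is the zero locus of a set of polynomials. -/
def IsAlgebraicSet (V : Set (Fin n → ℂ)) : Prop :=
  ∃ I : Set (MvPolynomial (Fin n) ℂ), V = zeroLocus n I

/-- An irreducible (affine) variety in `ℂⁿ`: a nonempty algebraic set that is not covered
by two algebraic sets unless it is contained in one of them. -/
def IsIrredVariety (V : Set (Fin n → ℂ)) : Prop :=
  IsAlgebraicSet n V ∧ V.Nonempty ∧
    ∀ V₁ V₂ : Set (Fin n → ℂ), IsAlgebraicSet n V₁ → IsAlgebraicSet n V₂ →
      V ⊆ V₁ ∪ V₂ → V ⊆ V₁ ∨ V ⊆ V₂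

/-- There is a strictly increasing chain of `d + 1` irreducible varieties inside `V`. -/
def HasChain (V : Set (Fin n → ℂ)) (d : ℕ) : Prop :=
  ∃ W : Fin (d + 1) → Set (Fin n → ℂ),
    (∀ i, IsIrredVariety n (W i)) ∧ (∀ i j : Fin (d + 1), i < j → W i ⊂ W j) ∧
      W (Fin.last d) ⊆ V

/-- The (Krull) dimension of a subset of `ℂⁿ`, as the length of the longest chain of
irreducible subvarieties. -/
def dim (V : Set (Fin n → ℂ)) : ℕ := sSup {d | HasChain n V d}

/-- `W` is an irreducible component of `X`: an irreducible subvariety that is maximal among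
irreducible subvarieties of `X`. -/
def IsIrredComponent (W X : Set (Fin n → ℂ)) : Prop :=
  IsIrredVariety n W ∧ W ⊆ X ∧
    ∀ W', IsIrredVariety n W' → W ⊆ W' → W' ⊆ X → W' = W

/-- The degree of an irreducible variety `V ⊆ ℂⁿ` of dimension `d` (i.e. the degree of its
projective closure): the largest finite number of points in which an affine-linear subspace of
dimension `n - d` meets `V`. -/
def degree (V : Set (Fin n → ℂ)) : ℕ :=
  sSup { m | ∃ L : AffineSubspace ℂ (Fin n → ℂ),
    Module.finrank ℂ L.direction = n - dim n V ∧ (V ∩ ↑L).Finite ∧ (V ∩ ↑L).ncard = m }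

/-- The degree of an algebraic set: the sum of the degrees of its irreducible components. -/
def degreeSum (X : Set (Fin n → ℂ)) : ℕ :=
  ∑ᶠ W ∈ {W | IsIrredComponent n W X}, degree n W

/-- The maximal dimension of an irreducible component of `X` containing `V` equals `e`. -/
def MaxCompDimEq (X V : Set (Fin n → ℂ)) (e : ℕ) : Prop :=
  (∃ W, IsIrredComponent n W X ∧ V ⊆ W ∧ dim n W = e) ∧
    ∀ W, IsIrredComponent n W X → V ⊆ W → dim n W ≤ e

/-- The partial degrees `δ_i(V)` of an irreducible variety `V`:  the minimal `δ` such that there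
are polynomials of degree at most `δ` cutting out an algebraic set containing `V` whose
irreducible components containing `V` have maximal dimension `n - i`.  By convention
`δ_0(V) = 0`. -/
def partialDeg (V : Set (Fin n → ℂ)) (i : ℕ) : ℕ :=
  if i = 0 then 0
  else sInf { δ | ∃ I : Finset (MvPolynomial (Fin n) ℂ),
    (∀ f ∈ I, f.totalDegree ≤ δ) ∧ V ⊆ zeroLocus n ↑I ∧
      MaxCompDimEq n (zeroLocus n ↑I) V (n - i) }

/-- The partial degrees as extended naturals, with the convention `δ_i(V) = ∞` for
`i > n - dim V`. -/
def partialDegE (V : Set (Fin n → ℂ)) (i : ℕ) : ℕ∞ :=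
  if i ≤ n - dim n V then (partialDeg n V i : ℕ∞) else ⊤

/-- `δ(V)` for an irreducible variety `V`: the minimal `δ` such that `V` is an irreducible
component of the zero set of a finite family of polynomials of degree at most `δ`. -/
def deltaIrr (V : Set (Fin n → ℂ)) : ℕ :=
  sInf { δ | ∃ I : Finset (MvPolynomial (Fin n) ℂ),
    (∀ f ∈ I, f.totalDegree ≤ δ) ∧ IsIrredComponent n V (zeroLocus n ↑I) }

/-- `δ(V)` for a general algebraic set `V`: the minimal `δ` such that every irreducible
component of `V` is an irreducible component of the zero set of a finite family of polynomials
of degree at most `δ`. -/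
def deltaSet (V : Set (Fin n → ℂ)) : ℕ :=
  sInf { δ | ∃ I : Finset (MvPolynomial (Fin n) ℂ),
    (∀ f ∈ I, f.totalDegree ≤ δ) ∧
      ∀ W, IsIrredComponent n W V → IsIrredComponent n W (zeroLocus n ↑I) }

/-- An algebraic set all of whose irreducible components have dimension `d`. -/
def IsAlgSetOfDim (V : Set (Fin n → ℂ)) (d : ℕ) : Prop :=
  IsAlgebraicSet n V ∧ V.Nonempty ∧ ∀ W, IsIrredComponent n W V → dim n W = d

/-- `Δ_i(V) = max (deg V / (δ_{i+1}(V) ⋯ δ_{n-d}(V))) 1`. -/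
def Delta (V : Set (Fin n → ℂ)) (i : ℕ) : ℝ :=
  max ((degree n V : ℝ) / ∏ j ∈ Finset.Icc (i + 1) (n - dim n V), (partialDeg n V j : ℝ)) 1

/-- `i` is admissible with respect to `V` if `δ_{i+1}(V) > 2 i δ_i(V)` (with the convention
`δ_i(V) = ∞` for `i > n - dim V`). -/
def Admissible (V : Set (Fin n → ℂ)) (i : ℕ) : Prop :=
  ((2 * i : ℕ) : ℕ∞) * partialDegE n V i < partialDegE n V (i + 1)

/-- The interval `ℛ_i(V) = [c₁ δ_i(V)^{n-i} Δ_i(V), (c₀/2) δ_{i+1}(V)^{n-i} Δ_i(V)]`,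
where `δ_{n-d+1}(V) = ∞` makes the last interval a half-line. -/
def RSet (c0 c1 : ℝ) (V : Set (Fin n → ℂ)) (i : ℕ) : Set ℝ :=
  if i = n - dim n V then
    Set.Ici (c1 * (partialDeg n V i : ℝ) ^ (n - i) * Delta n V i)
  else
    Set.Icc (c1 * (partialDeg n V i : ℝ) ^ (n - i) * Delta n V i)
      ((c0 / 2) * (partialDeg n V (i + 1) : ℝ) ^ (n - i) * Delta n V i)

/-- The interval `ℛ^l_{s,τ}(V) = [τ δ_s(V)^{n-(s+l)} Δ_s(V), τ δ_{s+1}(V)^{n-(s+l)} Δ_s(V)]`,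
where `δ_{n-d+1}(V) = ∞` makes the last interval a half-line. -/
def RlSet (τ : ℝ) (l : ℕ) (V : Set (Fin n → ℂ)) (s : ℕ) : Set ℝ :=
  if s = n - dim n V then
    Set.Ici (τ * (partialDeg n V s : ℝ) ^ (n - (s + l)) * Delta n V s)
  else
    Set.Icc (τ * (partialDeg n V s : ℝ) ^ (n - (s + l)) * Delta n V s)
      (τ * (partialDeg n V (s + 1) : ℝ) ^ (n - (s + l)) * Delta n V s)

/-- The ideal `I(V)` of polynomials vanishing on `V ⊆ ℂⁿ`. -/
def vanishingIdeal (V : Set (Fin n → ℂ)) : Ideal (MvPolynomial (Fin n) ℂ) where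
  carrier := {f | ∀ x ∈ V, eval x f = 0}
  add_mem' := by
    intro a b ha hb x hx
    simp [ha x hx, hb x hx]
  zero_mem' := by
    intro x hx
    simp
  smul_mem' := by
    intro c f hf x hx
    simp [smul_eq_mul, hf x hx]

/-- The ideal `I_ℝ(V)` of real polynomials vanishing on `V ⊆ ℂⁿ`. -/
def vanishingIdealR (V : Set (Fin n → ℂ)) : Ideal (MvPolynomial (Fin n) ℝ) :=
  (vanishingIdeal n V).comap (MvPolynomial.map (algebraMap ℝ ℂ))

/-- The affine Hilbert function `H_{I(V)}(m) = dim_ℂ ℂ[x]_{≤ m} / I(V)_{≤ m}`, realised as the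
dimension of the image of the space of polynomials of total degree at most `m` in the quotient
ring `ℂ[x]/I(V)`. -/
def hilbert (V : Set (Fin n → ℂ)) (m : ℕ) : ℕ :=
  Module.finrank ℂ
    (Submodule.map (Ideal.Quotient.mkₐ ℂ (vanishingIdeal n V)).toLinearMap
      (restrictTotalDegree (Fin n) ℂ m))

/-- The real affine Hilbert function `H_{I(V),ℝ}(m) = dim_ℝ ℝ[x]_{≤ m} / I_ℝ(V)_{≤ m}`. -/
def hilbertR (V : Set (Fin n → ℂ)) (m : ℕ) : ℕ :=
  Module.finrank ℝ
    (Submodule.map (Ideal.Quotient.mkₐ ℝ (vanishingIdealR n V)).toLinearMap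
      (restrictTotalDegree (Fin n) ℝ m))

/-- The inclusion `ℝⁿ → ℂⁿ`. -/
def toC (x : Fin n → ℝ) : Fin n → ℂ := fun i => (x i : ℂ)

/-- The set of real points of `V ⊆ ℂⁿ`. -/
def realPts (V : Set (Fin n → ℂ)) : Set (Fin n → ℝ) := {x | toC n x ∈ V}

/-- The real zero set of a real polynomial. -/
def zeroSetR (g : MvPolynomial (Fin n) ℝ) : Set (Fin n → ℝ) := {x | eval x g = 0}

/-- The zero locus of the polynomials `P 1, …, P i` (the first `i` members of a tuple of
polynomials indexed from `1`). -/
def zeroLocusUpTo (P : ℕ → MvPolynomial (Fin n) ℂ) (i : ℕ) : Set (Fin n → ℂ) :=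
  zeroLocus n {f | ∃ j : ℕ, 1 ≤ j ∧ j ≤ i ∧ f = P j}

/-- `V'` is an `(n-s)`-minimal variety of the irreducible variety `V`. -/
def IsMinimalVariety (V V' : Set (Fin n → ℂ)) (s : ℕ) : Prop :=
  IsIrredVariety n V' ∧ V ⊆ V' ∧ dim n V' = n - s ∧
    ∀ f ∈ vanishingIdeal n V, f ∉ vanishingIdeal n V' →
      partialDegE n V (s + 1) ≤ (f.totalDegree : ℕ∞)

/-- `S` is `(k,b)`-free with respect to `T`, for the incidence relation `R`. -/
def KBFree {α β : Type*} (R : α → β → Prop) (S : Finset α) (T : Finset β) (k b : ℕ) : Prop :=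
  ¬ ∃ (P : Finset α) (B : Finset β), P ⊆ S ∧ B ⊆ T ∧ P.card = k ∧ B.card = b ∧
      ∀ s ∈ P, ∀ t ∈ B, R s t

/-- The number of incidences between a finite set of points and a finite family of sets. -/
def incCountAbs {α : Type*} (S : Finset α) (T : Finset (Set α)) : ℕ :=
  ∑ t ∈ T, (↑S ∩ t).ncard

/-- The number of incidences between a finite set of real points and a finite family of
subsets of `ℂⁿ`. -/
def incCount (S : Finset (Fin n → ℝ)) (T : Finset (Set (Fin n → ℂ))) : ℕ :=
  ∑ t ∈ T, (↑S ∩ toC n ⁻¹' t).ncard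

/-- The total degree `deg T = ∑_{t ∈ T} deg t` of a finite family of algebraic sets. -/
def degFamily (T : Finset (Set (Fin n → ℂ))) : ℕ := ∑ t ∈ T, degreeSum n t

/-- The total degree of a finite family of irreducible varieties. -/
def degFamilyIrred (T : Finset (Set (Fin n → ℂ))) : ℕ := ∑ t ∈ T, degree n t

/-- `α_k(d)`. -/
def alpha (k d : ℕ) : ℝ :=
  if k = 1 ∧ d = 1 then 0 else (k : ℝ) * ((d : ℝ) - 1) / ((d : ℝ) * (k : ℝ) - 1)

/-- `β_k(d)`. -/
def beta (k d : ℕ) : ℝ :=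
  if k = 1 ∧ d = 1 then 1 else (d : ℝ) * ((k : ℝ) - 1) / ((d : ℝ) * (k : ℝ) - 1)

/-- `τ_d(b,k) = b^{1-β_k(d)} k^{1-α_k(d)}`. -/
def tauC (d b k : ℕ) : ℝ := (b : ℝ) ^ (1 - beta k d) * (k : ℝ) ^ (1 - alpha k d)

/-- The Chardin–Philippon property of the constant `c₀`: for every pure-dimensional algebraic
set `W ⊆ ℂⁿ` and every `m ≥ 2 (n - dim W) δ(W)` one has `H_{I(W)}(m) ≥ c₀ m^{dim W} deg W`. -/
def ChardinPhilippon (c0 : ℝ) : Prop :=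
  ∀ (W : Set (Fin n → ℂ)) (e : ℕ), IsAlgSetOfDim n W e →
    ∀ m : ℕ, 2 * (n - e) * deltaSet n W ≤ m →
      c0 * (m : ℝ) ^ e * (degreeSum n W : ℝ) ≤ (hilbert n W m : ℝ)

/-- The defining property of the constant `c₁`: for every irreducible variety `V`, every
positive integer lies in some interval `ℛ_i(V)` with `i` admissible with respect to `V`. -/
def CoversPositiveIntegers (c0 c1 : ℝ) : Prop :=
  ∀ V : Set (Fin n → ℂ), IsIrredVariety n V →
    ∀ m : ℕ, 0 < m → ∃ i, Admissible n V i ∧ (m : ℝ) ∈ RSet n c0 c1 V i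

/-- `i_V(M)`: the smallest admissible `i` such that `M^{n-i} Δ_i(V) ∈ ℛ_i(V)`. -/
def iV (c0 c1 : ℝ) (V : Set (Fin n → ℂ)) (M : ℕ) : ℕ :=
  sInf {i | Admissible n V i ∧ (M : ℝ) ^ (n - i) * Delta n V i ∈ RSet n c0 c1 V i}

/-- A real polynomial bisects a finite set `S ⊆ ℝⁿ` if it is positive on at most half of `S`
and negative on at most half of `S`. -/
def Bisects (g : MvPolynomial (Fin n) ℝ) (S : Finset (Fin n → ℝ)) : Prop :=
  ((↑S ∩ {x | 0 < eval x g}).ncard : ℝ) ≤ (S.card : ℝ) / 2 ∧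
    ((↑S ∩ {x | eval x g < 0}).ncard : ℝ) ≤ (S.card : ℝ) / 2

/-- The set of `r`-rich points of a family `T`: points lying in at least `r` members of `T`. -/
def richPts (T : Finset (Set (Fin n → ℂ))) (r : ℕ) : Set (Fin n → ℂ) :=
  {x | r ≤ ({t | t ∈ T ∧ x ∈ t} : Set (Set (Fin n → ℂ))).ncard}

/-- A real hypersurface of degree at most `D`: the real zero set of a nonzero real polynomial
of degree at most `D`. -/
def IsRealHypersurfaceDegLE (t : Set (Fin n → ℝ)) (D : ℕ) : Prop :=
  ∃ p : MvPolynomial (Fin n) ℝ, p ≠ 0 ∧ t = zeroSetR n p ∧ p.totalDegree ≤ D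

/-- Lexicographic comparison of the tuples `(f 1, …, f m)` and `(g 1, …, g m)`. -/
def LexLE (m : ℕ) (f g : ℕ → ℕ) : Prop :=
  (∀ j ∈ Finset.Icc 1 m, f j = g j) ∨
    ∃ i ∈ Finset.Icc 1 m, (∀ j, 1 ≤ j → j < i → f j = g j) ∧ f i < g i


section Part1


section NN
variable {B : Type*} [CommRing B] [Algebra ℂ B]

lemma pow_step (Y Z : Submodule ℂ B) (N : ℕ) (h : Y ^ (N+1) ≤ Z * Y ^ N) (m : ℕ) :
    Y ^ (m + N) ≤ Z ^ m * Y ^ N := by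
  induction m with
  | zero => simp
  | succ m ih =>
    calc Y ^ (m + 1 + N) = Y ^ m * Y ^ (N+1) := by rw [← pow_add]; congr 1; ring
      _ ≤ Y ^ m * (Z * Y ^ N) := mul_le_mul' le_rfl h
      _ = Z * Y ^ (m + N) := by rw [pow_add]; ring
      _ ≤ Z * (Z ^ m * Y ^ N) := mul_le_mul' le_rfl ih
      _ = Z ^ (m+1) * Y ^ N := by ring

/-- span of 1 and a family -/
def sp {r : ℕ} (y : Fin r → B) : Submodule ℂ B := Submodule.span ℂ (insert 1 (Set.range y))

lemma one_mem_sp {r : ℕ} (y : Fin r → B) : (1 : B) ∈ sp y := Submodule.subset_span (by simp)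
lemma mem_sp {r : ℕ} (y : Fin r → B) (i) : y i ∈ sp y := Submodule.subset_span (by simp)
lemma one_le_sp {r : ℕ} (y : Fin r → B) : 1 ≤ sp y := by
  rw [Submodule.one_le]; exact one_mem_sp y

lemma sp_fg {r : ℕ} (y : Fin r → B) : (sp y).FG :=
  Submodule.fg_span ((Set.finite_range y).insert 1)

lemma sp_pow_mono {r : ℕ} (y : Fin r → B) : Monotone fun m => sp y ^ m := 
  pow_right_monotone (one_le_sp y)

/-- auxiliary -/
def KK (Z Y : Submodule ℂ B) : ℕ → Submodule ℂ B
  | 0 => ⊥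
  | k+1 => Z * Y ^ k

lemma KK_step (Z Y : Submodule ℂ B) (k : ℕ) : Y * KK Z Y k ≤ KK Z Y (k+1) := by
  cases k with
  | zero => simp [KK]
  | succ k => simp only [KK]; rw [pow_succ]; exact le_of_eq (by ring)

lemma KK_monomial {r : ℕ} (Z Y : Submodule ℂ B) (y : Fin r → B) (v : Fin r → ℂ) (t : B)
    (hy : ∀ i, y i ∈ Y) (ht : t ∈ Y) (hz : ∀ i, y i - v i • t ∈ Z) (s : Multiset (Fin r)) :
    (s.map y).prod - (s.map v).prod • t ^ s.card ∈ KK Z Y s.card := by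
  induction s using Multiset.induction_on with
  | empty => simp [KK]
  | cons i s ih =>
    have : ((i ::ₘ s).map y).prod - ((i ::ₘ s).map v).prod • t ^ (i ::ₘ s).card
      = y i * ((s.map y).prod - (s.map v).prod • t ^ s.card)
        + (y i - v i • t) * ((s.map v).prod • t ^ s.card) := by
      simp only [Multiset.map_cons, Multiset.prod_cons, Multiset.card_cons, Algebra.smul_def, map_mul]
      ring
    rw [this, Multiset.card_cons]
    apply Submodule.add_mem
    · exact KK_step Z Y _ (Submodule.mul_mem_mul (hy i) ih)
    · exact Submodule.mul_mem_mul (hz i) (Submodule.smul_mem _ _ (Submodule.pow_mem_pow _ ht _))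

lemma KK_pow (Z Y : Submodule ℂ B) (t : B) (ht : t ∈ Y) (hY : Y ≤ Z ⊔ Submodule.span ℂ {t}) (k : ℕ) :
    Y ^ k ≤ KK Z Y k ⊔ Submodule.span ℂ {t ^ k} := by
  induction k with
  | zero => simp [KK, Submodule.one_eq_span]
  | succ k ih =>
    calc Y ^ (k+1) = Y * Y ^ k := by ring
      _ ≤ Y * (KK Z Y k ⊔ Submodule.span ℂ {t ^ k}) := mul_le_mul' le_rfl ih
      _ = Y * KK Z Y k ⊔ Y * Submodule.span ℂ {t ^ k} := Submodule.mul_sup ..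
      _ ≤ KK Z Y (k+1) ⊔ (KK Z Y (k+1) ⊔ Submodule.span ℂ {t ^ (k+1)}) := by
        refine sup_le_sup (KK_step ..) ?_
        refine (mul_le_mul' hY le_rfl).trans ?_
        rw [Submodule.sup_mul]
        refine sup_le_sup ?_ ?_
        · refine mul_le_mul' le_rfl ?_
          rw [Submodule.span_singleton_le_iff_mem]
          exact Submodule.pow_mem_pow _ ht _
        · rw [Submodule.span_mul_span]; simp [pow_succ']
      _ ≤ _ := by simp

lemma nn_step [Nontrivial B] {r : ℕ} (y : Fin (r+1) → B) (h : ¬ AlgebraicIndependent ℂ y) :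
    ∃ z : Fin r → B, (∀ i, z i ∈ Submodule.span ℂ (Set.range y)) ∧
      ∃ N, sp y ^ (N+1) ≤ sp z * sp y ^ N := by
  rw [algebraicIndependent_iff] at h
  push Not at h
  obtain ⟨F, hF, hF0⟩ := h
  set M := F.totalDegree with hM
  have hMpos : M ≠ 0 := by
    intro h0
    rw [h0] at hM
    rw [eq_comm, totalDegree_eq_zero_iff_eq_C] at hM
    rw [hM] at hF hF0
    simp only [aeval_C] at hF
    rw [map_eq_zero_iff _ (FaithfulSMul.algebraMap_injective ℂ B)] at hF
    simp [hF] at hF0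
  obtain ⟨N, hN⟩ := Nat.exists_eq_succ_of_ne_zero hMpos
  have hG : homogeneousComponent M F ≠ 0 := by
    intro h0
    obtain ⟨α, hα, hα'⟩ := Finset.exists_mem_eq_sup F.support
      (by simpa using hF0) (fun s => s.sum fun _ e => e)
    have := congrArg (coeff α) h0
    rw [coeff_homogeneousComponent, if_pos] at this
    · simp at this; simp [this] at hα
    · rw [hM, totalDegree, hα']; rfl
  obtain ⟨v, hv⟩ : ∃ v, eval v (homogeneousComponent M F) ≠ 0 := by
    by_contra! hcon
    exact hG (MvPolynomial.funext fun x => by simpa using hcon x)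
  obtain ⟨i0, hi0⟩ : ∃ i0, v i0 ≠ 0 := by
    by_contra! hcon
    have : v = 0 := funext hcon
    rw [this] at hv
    apply hv
    have := (homogeneousComponent_isHomogeneous M F).coeff_eq_zero (d := 0) (by simpa using hMpos.symm)
    rw [← constantCoeff_eq] at this
    rw [← this, constantCoeff_eq]
    simp [eval_zero, constantCoeff_eq]
  set t : B := (v i0)⁻¹ • y i0 with ht
  set z : Fin r → B := fun i => y (i0.succAbove i) - v (i0.succAbove i) • t with hzdef
  have hz : ∀ i, y i - v i • t ∈ sp z := by
    intro i
    rcases Fin.eq_self_or_eq_succAbove i0 i with rfl | ⟨j, rfl⟩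
    · rw [ht, smul_smul, mul_inv_cancel₀ hi0]; simp
    · exact mem_sp z j
  have htY : t ∈ sp y := Submodule.smul_mem _ _ (mem_sp y _)
  have hYle : sp y ≤ sp z ⊔ Submodule.span ℂ {t} := by
    rw [sp, Submodule.span_le]
    rintro x (rfl | ⟨i, rfl⟩)
    · exact Submodule.mem_sup_left (one_mem_sp z)
    · have : y i = (y i - v i • t) + v i • t := by abel
      rw [this]
      exact Submodule.add_mem_sup (hz i) (Submodule.smul_mem _ _ (Submodule.mem_span_singleton_self t))
  refine ⟨z, fun i => ?_, N, ?_⟩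
  · exact Submodule.sub_mem _ (Submodule.subset_span ⟨_, rfl⟩)
      (Submodule.smul_mem _ _ (Submodule.smul_mem _ _ (Submodule.subset_span ⟨_, rfl⟩)))
  have key : t ^ (N+1) ∈ KK (sp z) (sp y) (N+1) := by
    have h1 : aeval y F - (eval v (homogeneousComponent M F)) • t ^ (N+1) ∈ KK (sp z) (sp y) (N+1) := by
      have e1 : aeval y F = ∑ α ∈ F.support, coeff α F • (α.toMultiset.map y).prod := by
        conv_lhs => rw [F.as_sum]
        rw [map_sum]
        refine Finset.sum_congr rfl fun α _ => ?_
        rw [aeval_monomial, Algebra.smul_def]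
        congr 1
        rw [Finsupp.toMultiset_map, Finsupp.prod_toMultiset, Finsupp.prod_mapDomain_index] <;> simp [pow_add]
      have e2 : eval v (homogeneousComponent M F) = ∑ α ∈ F.support, if α.toMultiset.card = N + 1 then
          coeff α F * (α.toMultiset.map v).prod else 0 := by
        rw [homogeneousComponent_apply, map_sum, Finset.sum_filter]
        refine Finset.sum_congr rfl fun α _ => ?_
        have : α.degree = α.toMultiset.card := by rw [Finsupp.card_toMultiset]; rfl
        rw [this, hN]
        split_ifs
        · rw [eval_monomial]
          congr 1
          rw [Finsupp.toMultiset_map, Finsupp.prod_toMultiset, Finsupp.prod_mapDomain_index] <;> simp [pow_add]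
        · rfl
      rw [e1, e2, Finset.sum_smul, ← Finset.sum_sub_distrib]
      refine Submodule.sum_mem _ fun α hα => ?_
      have hdeg : α.toMultiset.card ≤ N + 1 := by
        rw [Finsupp.card_toMultiset]
        exact (le_totalDegree hα).trans (by rw [← hM, hN])
      split_ifs with hc
      · have := KK_monomial (sp z) (sp y) y v t (mem_sp y) htY hz α.toMultiset
        rw [hc] at this
        rw [mul_smul, ← smul_sub]
        exact Submodule.smul_mem _ _ this
      · rw [zero_smul, sub_zero]
        refine Submodule.smul_mem _ _ ?_
        have h2 : (α.toMultiset.map y).prod ∈ sp y ^ N := by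
          apply sp_pow_mono y (show α.toMultiset.card ≤ N by omega)
          generalize α.toMultiset = s
          induction s using Multiset.induction_on with
          | empty => simp [Submodule.one_eq_span, Submodule.mem_span_singleton_self]
          | cons i s ih =>
            simp only [Multiset.map_cons, Multiset.prod_cons, Multiset.card_cons]
            rw [pow_succ']; exact Submodule.mul_mem_mul (mem_sp y i) ih
        have := Submodule.mul_mem_mul (one_mem_sp z) h2
        rwa [one_mul] at this
    rw [hF, zero_sub] at h1
    have h2 := Submodule.smul_mem _ (-(eval v (homogeneousComponent M F))⁻¹) h1
    rwa [smul_neg, neg_smul, neg_neg, smul_smul, inv_mul_cancel₀ hv, one_smul] at h2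
  refine (KK_pow (sp z) (sp y) t htY hYle (N+1)).trans ?_
  refine sup_le le_rfl ?_
  rwa [Submodule.span_singleton_le_iff_mem]

lemma sp_le {r : ℕ} (y : Fin r → B) (S : Submodule ℂ B) (h1 : 1 ∈ S) (h : ∀ i, y i ∈ S) :
    sp y ≤ S := by
  rw [sp, Submodule.span_le]
  rintro x (rfl | ⟨i, rfl⟩)
  · exact h1
  · exact h i

lemma nn_main [Nontrivial B] (r : ℕ) (y : Fin r → B) :
    ∃ (e : ℕ) (z : Fin e → B), (∀ i, z i ∈ Submodule.span ℂ (Set.range y)) ∧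
      AlgebraicIndependent ℂ z ∧ ∃ U : Submodule ℂ B, U.FG ∧ ∀ m, sp y ^ m ≤ sp z ^ m * U := by
  induction r with
  | zero =>
    refine ⟨0, y, fun i => i.elim0, ?_, 1, ?_, fun m => by simp⟩
    · rw [algebraicIndependent_empty_type_iff]; exact FaithfulSMul.algebraMap_injective ℂ B
    · rw [Submodule.one_eq_span]; exact Submodule.fg_span_singleton _
  | succ r ih =>
    by_cases h : AlgebraicIndependent ℂ y
    · refine ⟨r+1, y, fun i => Submodule.subset_span ⟨_, rfl⟩, h, 1, ?_, fun m => by simp⟩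
      rw [Submodule.one_eq_span]; exact Submodule.fg_span_singleton _
    · obtain ⟨z, hz, N, hN⟩ := nn_step y h
      obtain ⟨e, w, hw, hi, U, hU, hm⟩ := ih z
      refine ⟨e, w, fun i => ?_, hi, U * sp y ^ N, hU.mul ((sp_fg y).pow N), fun m => ?_⟩
      · exact Submodule.span_le.2 (by rintro _ ⟨j, rfl⟩; exact hz j) (hw i)
      · calc sp y ^ m ≤ sp y ^ (m + N) := sp_pow_mono y (Nat.le_add_right _ _)
          _ ≤ sp z ^ m * sp y ^ N := pow_step _ _ N hN m
          _ ≤ (sp w ^ m * U) * sp y ^ N := mul_le_mul' (hm m) le_rfl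
          _ = _ := mul_assoc ..

end NN

end Part1

section Part2


section DT

lemma dim_int {A B : Type*} [CommRing A] [CommRing B] [Algebra A B] [Algebra.IsIntegral A B]
    (inj : Function.Injective (algebraMap A B)) : ringKrullDim A = ringKrullDim B := by
  apply le_antisymm
  · rw [ringKrullDim, Order.krullDim]
    refine iSup_le fun l => ?_
    obtain ⟨Q, hQ, hQ2⟩ := Ideal.exists_ideal_over_prime_of_isIntegral (S := B) l.head.asIdeal ⊥
      (by intro x hx; have : x = 0 := inj (by simpa using hx)
          rw [this]; exact zero_mem _)
    obtain ⟨hQ1, hQ2⟩ := hQ2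
    have : Q.LiesOver l.head.asIdeal := ⟨hQ2.symm⟩
    obtain ⟨L, hL, -⟩ := Ideal.exists_ltSeries_of_hasGoingUp l Q
    rw [← hL]
    exact Order.LTSeries.length_le_krullDim L
  · refine Order.krullDim_le_of_strictMono (PrimeSpectrum.comap (algebraMap A B)) ?_
    intro p q hpq
    exact Ideal.IsIntegral.comap_lt_comap hpq

def trans {e : ℕ} (v : Fin e → ℂ) : MvPolynomial (Fin e) ℂ →ₐ[ℂ] MvPolynomial (Fin e) ℂ :=
  aeval (fun i => X i + C (v i))

lemma trans_comp {e : ℕ} (v : Fin e → ℂ) : (trans v).comp (trans (-v)) = AlgHom.id ℂ _ := by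
  ext i : 1
  simp [trans, algebraMap_eq]

def transE {e : ℕ} (v : Fin e → ℂ) : MvPolynomial (Fin e) ℂ ≃ₐ[ℂ] MvPolynomial (Fin e) ℂ :=
  AlgEquiv.ofAlgHom (trans v) (trans (-v)) (trans_comp v) (by simpa using trans_comp (-v))

lemma eval_trans {e : ℕ} (v y : Fin e → ℂ) (f : MvPolynomial (Fin e) ℂ) :
    eval y (trans v f) = eval (y + v) f := by
  have : (aeval y : MvPolynomial (Fin e) ℂ →ₐ[ℂ] ℂ).comp (trans v) = aeval (y + v) := by
    ext i : 1
    simp [trans]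
  have := DFunLike.congr_fun this f
  simpa [aeval_eq_eval] using this

lemma height_point (e : ℕ) (x y : Fin e → ℂ) :
    (MvPolynomial.vanishingIdeal ℂ {x}).height = (MvPolynomial.vanishingIdeal ℂ {y}).height := by
  rw [← RingEquiv.height_comap (transE (x - y)).toRingEquiv (MvPolynomial.vanishingIdeal ℂ {y})]
  congr 1
  ext f
  simp only [Ideal.mem_comap, mem_vanishingIdeal_singleton_iff]
  change _ ↔ aeval y (trans (x - y) f) = 0
  rw [aeval_eq_eval, aeval_eq_eval, eval_trans]
  simp

lemma dim_A (e : ℕ) : ringKrullDim (MvPolynomial (Fin e) ℂ) = e := by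
  rw [MvPolynomial.ringKrullDim_of_isNoetherianRing]; simp

lemma finA (e : ℕ) : FiniteRingKrullDim (MvPolynomial (Fin e) ℂ) := by
  rw [finiteRingKrullDim_iff_ne_bot_and_top]
  rw [dim_A]
  exact ⟨by exact WithBot.coe_ne_bot, by 
    rw [← WithBot.coe_top]; exact_mod_cast ENat.natCast_ne_top e⟩

lemma height_point' (e : ℕ) (x : Fin e → ℂ) :
    ((MvPolynomial.vanishingIdeal ℂ {x}).height : WithBot ℕ∞) =
      ringKrullDim (MvPolynomial (Fin e) ℂ) := by
  have := finA e
  obtain ⟨p, hp, h⟩ := Ideal.exists_isMaximal_height (R := MvPolynomial (Fin e) ℂ)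
  obtain ⟨y, rfl⟩ := MvPolynomial.isMaximal_iff_eq_vanishingIdeal_singleton.1 hp
  rw [height_point e x y, h]

lemma dim_A_mod (e : ℕ) (π : MvPolynomial (Fin e) ℂ) (h : π ≠ 0) (hu : ¬ IsUnit π) :
    ringKrullDim (MvPolynomial (Fin e) ℂ ⧸ Ideal.span {π}) + 1 = e := by
  obtain ⟨M, hM, hM2⟩ := Ideal.exists_le_maximal (Ideal.span {π})
    (by rwa [Ne, Ideal.span_singleton_eq_top])
  obtain ⟨y, rfl⟩ := MvPolynomial.isMaximal_iff_eq_vanishingIdeal_singleton.1 hM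
  rw [Module.ringKrullDim_quotient_add_one_of_mem_nonZeroDivisors
    (mem_nonZeroDivisors_of_ne_zero h) (height_point' e y) (hM2 (Ideal.mem_span_singleton_self π)), dim_A]

lemma E1_core {e : ℕ} {B : Type*} [CommRing B] [IsDomain B] [IsNoetherianRing B]
    [Algebra (MvPolynomial (Fin e) ℂ) B] [Algebra.IsIntegral (MvPolynomial (Fin e) ℂ) B]
    (inj : Function.Injective (algebraMap (MvPolynomial (Fin e) ℂ) B)) (f : B) (hf : f ≠ 0)
    (Q : Ideal B) (hQ : Q ∈ (Ideal.span {f}).minimalPrimes) :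
    ringKrullDim (B ⧸ Q) + 1 = e := by
  have hQp : Q.IsPrime := hQ.1.1
  have : FaithfulSMul (MvPolynomial (Fin e) ℂ) B := (faithfulSMul_iff_algebraMap_injective _ _).2 inj
  have h1 := Ideal.height_le_one_of_isPrincipal_of_mem_minimalPrimes _ Q hQ
  set p := Q.comap (algebraMap (MvPolynomial (Fin e) ℂ) B) with hp
  have : Q.LiesOver p := ⟨rfl⟩
  have h2 := Ideal.height_eq_height_add_of_liesOver_of_hasGoingDown p Q
  have h3 : p.height ≤ 1 := by rw [h2] at h1; exact le_trans le_self_add h1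
  have hp0 : p ≠ ⊥ := by
    intro h0
    have hfQ : f ∈ Q := hQ.1.2 (Ideal.mem_span_singleton_self f)
    exact Ideal.comap_ne_bot_of_integral_mem hf hfQ (Algebra.IsIntegral.isIntegral f) h0
  have hpp : p.IsPrime := Ideal.IsPrime.comap _
  obtain ⟨π, hπ, hπp⟩ := hpp.exists_mem_prime_of_ne_bot hp0
  have hπI : (Ideal.span {π}).IsPrime := (Ideal.span_singleton_prime hπp.ne_zero).2 hπp
  have heq : Ideal.span {π} = p := by
    have hle : Ideal.span {π} ≤ p := by rwa [Ideal.span_singleton_le_iff_mem]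
    by_contra hne
    have h4 := Ideal.height_add_one_le_of_lt_of_isPrime (lt_of_le_of_ne hle hne)
    have h5 := Ideal.one_le_height_span_singleton_of_mem_nonZeroDivisors
      (mem_nonZeroDivisors_of_ne_zero hπp.ne_zero)
    have h6 : (2 : ℕ∞) ≤ 1 := by
      calc (2 : ℕ∞) = 1 + 1 := by norm_num
        _ ≤ _ := add_le_add_left h5 1
        _ ≤ _ := h4
        _ ≤ _ := h3
    exact absurd h6 (by norm_num)
  have h7 := dim_A_mod e π hπp.ne_zero hπp.not_isUnit
  rw [heq] at h7
  rw [← h7]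
  congr 1
  symm
  have : Function.Injective (algebraMap (MvPolynomial (Fin e) ℂ ⧸ p) (B ⧸ Q)) :=
    FaithfulSMul.algebraMap_injective _ _
  exact dim_int this

end DT

end Part2

section Part3


section NP
variable {B : Type*} [CommRing B] [Algebra ℂ B]

lemma sp_pow_eq {r : ℕ} (y : Fin r → B) (m : ℕ) :
    sp y ^ m = (restrictTotalDegree (Fin r) ℂ m).map (aeval y : MvPolynomial (Fin r) ℂ →ₐ[ℂ] B).toLinearMap := by
  apply le_antisymm
  · induction m with
    | zero =>
      rw [pow_zero, Submodule.one_le]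
      exact ⟨1, by simp [mem_restrictTotalDegree], by simp⟩
    | succ m ih =>
      rw [pow_succ, Submodule.mul_le]
      intro a ha b hb
      obtain ⟨f, hf, rfl⟩ := ih ha
      have : sp y ≤ (restrictTotalDegree (Fin r) ℂ 1).map (aeval y : MvPolynomial (Fin r) ℂ →ₐ[ℂ] B).toLinearMap := by
        apply sp_le
        · exact ⟨1, by simp [mem_restrictTotalDegree], by simp⟩
        · intro i
          exact ⟨X i, by simp [mem_restrictTotalDegree], by simp⟩
      obtain ⟨g, hg, rfl⟩ := this hb
      refine ⟨f * g, ?_, by simp⟩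
      simp only [SetLike.mem_coe, mem_restrictTotalDegree] at *
      exact (totalDegree_mul f g).trans (add_le_add hf hg)
  · rintro _ ⟨f, hf, rfl⟩
    simp only [SetLike.mem_coe, mem_restrictTotalDegree] at hf
    rw [AlgHom.toLinearMap_apply, f.as_sum, map_sum]
    refine Submodule.sum_mem _ fun d hd => ?_
    rw [aeval_monomial, ← Algebra.smul_def]
    refine Submodule.smul_mem _ _ ?_
    have hdm : (d.sum fun _ e => e) ≤ m := (le_totalDegree hd).trans hf
    refine sp_pow_mono y hdm ?_
    clear hd hdm hf
    show _ ∈ sp y ^ _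
    induction d using Finsupp.induction with
    | zero => rw [Finsupp.prod_zero_index, Finsupp.sum_zero_index, pow_zero]; exact Submodule.one_le.1 le_rfl
    | single_add a b d ha hb ih =>
      rw [Finsupp.prod_add_index' (by simp) (by intros; rw [pow_add]),
        Finsupp.sum_add_index' (by simp) (by simp), pow_add]
      refine Submodule.mul_mem_mul ?_ ih
      simp only [pow_zero, Finsupp.prod_single_index, Finsupp.sum_single_index]
      exact Submodule.pow_mem_pow _ (mem_sp y a) b

lemma nn_finite {r e : ℕ} (y : Fin r → B) (z : Fin e → B) (U : Submodule ℂ B) (hU : U.FG)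
    (h : ∀ m, sp y ^ m ≤ sp z ^ m * U) (hy : Function.Surjective (aeval (R := ℂ) y)) :
    (aeval (R := ℂ) z).toRingHom.Finite := by
  let _ : Algebra (MvPolynomial (Fin e) ℂ) B := (aeval (R := ℂ) z).toRingHom.toAlgebra
  change Module.Finite _ _
  obtain ⟨S, rfl⟩ := hU
  refine ⟨⟨S, ?_⟩⟩
  rw [eq_top_iff]
  intro b _
  obtain ⟨f, rfl⟩ := hy b
  have h1 : aeval y f ∈ sp y ^ f.totalDegree := by
    rw [sp_pow_eq]; exact ⟨f, by simp [mem_restrictTotalDegree], rfl⟩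
  have h2 := h _ h1
  refine Submodule.mul_induction_on h2 ?_ (fun _ _ => Submodule.add_mem _)
  intro a ha u hu
  rw [sp_pow_eq] at ha
  obtain ⟨g, -, rfl⟩ := ha
  have : (aeval z).toLinearMap g * u = g • u := (Algebra.smul_def g u).symm
  rw [this]
  refine Submodule.smul_mem _ _ ?_
  refine Submodule.span_induction (fun x hx => Submodule.subset_span hx) (zero_mem _)
    (fun _ _ _ _ => Submodule.add_mem _) ?_ hu
  intro c x _ hx
  have : c • x = (C c : MvPolynomial (Fin e) ℂ) • x := by
    rw [Algebra.smul_def, Algebra.smul_def]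
    congr 1
    change _ = aeval z (C c)
    simp
  rw [this]
  exact Submodule.smul_mem _ _ hx

end NP

section R
variable {n : ℕ}

/-- coordinate functions on the quotient -/
def cf (P : Ideal (MvPolynomial (Fin n) ℂ)) : Fin n → MvPolynomial (Fin n) ℂ ⧸ P :=
  fun i => Ideal.Quotient.mk P (X i)

lemma aeval_cf (P : Ideal (MvPolynomial (Fin n) ℂ)) :
    (aeval (cf P) : MvPolynomial (Fin n) ℂ →ₐ[ℂ] _) = Ideal.Quotient.mkₐ ℂ P := by
  ext i; simp [cf]

lemma nn_pkg (P : Ideal (MvPolynomial (Fin n) ℂ)) [P.IsPrime] :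
    ∃ (e : ℕ) (z : Fin e → MvPolynomial (Fin n) ℂ ⧸ P),
      (∀ i, z i ∈ Submodule.span ℂ (Set.range (cf P))) ∧
      AlgebraicIndependent ℂ z ∧ (aeval (R := ℂ) z).toRingHom.Finite ∧
      ∃ U : Submodule ℂ (MvPolynomial (Fin n) ℂ ⧸ P), U.FG ∧ ∀ m, sp (cf P) ^ m ≤ sp z ^ m * U := by
  have : Nontrivial (MvPolynomial (Fin n) ℂ ⧸ P) := inferInstance
  obtain ⟨e, z, h1, h2, U, h3, h4⟩ := nn_main n (cf P)
  refine ⟨e, z, h1, h2, nn_finite _ _ U h3 h4 ?_, U, h3, h4⟩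
  rw [aeval_cf]
  exact Ideal.Quotient.mkₐ_surjective ℂ P

lemma dim_of_nn {B : Type*} [CommRing B] [Algebra ℂ B] {e : ℕ} (z : Fin e → B)
    (hz : AlgebraicIndependent ℂ z) (hf : (aeval (R := ℂ) z).toRingHom.Finite) :
    ringKrullDim B = e := by
  let _ : Algebra (MvPolynomial (Fin e) ℂ) B := (aeval (R := ℂ) z).toRingHom.toAlgebra
  have : Module.Finite (MvPolynomial (Fin e) ℂ) B := hf
  rw [← dim_int (A := MvPolynomial (Fin e) ℂ) (B := B) hz, dim_A]

lemma E1_nn {B : Type*} [CommRing B] [IsDomain B] [IsNoetherianRing B] [Algebra ℂ B] {e : ℕ} (z : Fin e → B)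
    (hz : AlgebraicIndependent ℂ z) (hf : (aeval (R := ℂ) z).toRingHom.Finite) (f : B) (hf0 : f ≠ 0)
    (Q : Ideal B) (hQ : Q ∈ (Ideal.span {f}).minimalPrimes) : ringKrullDim (B ⧸ Q) + 1 = e := by
  let _ : Algebra (MvPolynomial (Fin e) ℂ) B := (aeval (R := ℂ) z).toRingHom.toAlgebra
  have : Module.Finite (MvPolynomial (Fin e) ℂ) B := hf
  exact E1_core (e := e) hz f hf0 Q hQ

/-- dimension of a prime as a natural number -/
lemma exists_dim (P : Ideal (MvPolynomial (Fin n) ℂ)) [P.IsPrime] :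
    ∃ e : ℕ, ringKrullDim (MvPolynomial (Fin n) ℂ ⧸ P) = e := by
  obtain ⟨e, z, h1, h2, h3, -⟩ := nn_pkg P
  exact ⟨e, dim_of_nn z h2 h3⟩

def pd (P : Ideal (MvPolynomial (Fin n) ℂ)) : ℕ :=
  sInf {e : ℕ | ringKrullDim (MvPolynomial (Fin n) ℂ ⧸ P) = e}

lemma pd_spec (P : Ideal (MvPolynomial (Fin n) ℂ)) [P.IsPrime] :
    ringKrullDim (MvPolynomial (Fin n) ℂ ⧸ P) = pd P := Nat.sInf_mem (exists_dim P)

lemma natcast_inj {a b : ℕ} (h : (a : WithBot ℕ∞) = b) : a = b := by exact_mod_cast h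

lemma pd_bot : pd (⊥ : Ideal (MvPolynomial (Fin n) ℂ)) = n := by
  apply natcast_inj
  rw [← pd_spec, ringKrullDim_eq_of_ringEquiv (RingEquiv.quotientBot _), dim_A]

lemma E1 (P : Ideal (MvPolynomial (Fin n) ℂ)) [hP : P.IsPrime] (f : MvPolynomial (Fin n) ℂ)
    (hf : f ∉ P) (Q : Ideal (MvPolynomial (Fin n) ℂ)) (hQ : Q ∈ (P ⊔ Ideal.span {f}).minimalPrimes) :
    pd Q + 1 = pd P := by
  have hQp : Q.IsPrime := hQ.1.1
  obtain ⟨e, z, h1, h2, h3, -⟩ := nn_pkg P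
  have he : pd P = e := by apply natcast_inj; rw [← pd_spec, dim_of_nn z h2 h3]
  have h4 := Ideal.minimalPrimes_map_of_surjective (Ideal.Quotient.mk_surjective (I := P)) (Ideal.span {f})
  rw [Ideal.mk_ker, sup_comm, Ideal.map_span, Set.image_singleton] at h4
  have h5 : Ideal.map (Ideal.Quotient.mk P) Q ∈ (Ideal.span {Ideal.Quotient.mk P f}).minimalPrimes := by
    rw [h4]; exact ⟨Q, hQ, rfl⟩
  have h6 := E1_nn z h2 h3 (Ideal.Quotient.mk P f) (by rwa [Ne, Ideal.Quotient.eq_zero_iff_mem]) _ h5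
  rw [ringKrullDim_eq_of_ringEquiv (DoubleQuot.quotQuotEquivQuotOfLE (le_sup_left.trans hQ.1.2)), pd_spec] at h6
  rw [he]
  exact_mod_cast h6

lemma pd_lt (P Q : Ideal (MvPolynomial (Fin n) ℂ)) [hP : P.IsPrime] [hQ : Q.IsPrime] (h : P < Q) :
    pd Q < pd P := by
  obtain ⟨f, hf, hfP⟩ := SetLike.exists_of_lt h
  have h1 := ringKrullDim_succ_le_of_surjective (Ideal.Quotient.factor h.le)
    (Ideal.Quotient.factor_surjective h.le) (r := Ideal.Quotient.mk P f)
    (mem_nonZeroDivisors_of_ne_zero (by rwa [Ne, Ideal.Quotient.eq_zero_iff_mem]))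
    (by simpa [Ideal.Quotient.eq_zero_iff_mem] using hf)
  rw [pd_spec, pd_spec] at h1
  exact_mod_cast h1

lemma pd_le (P Q : Ideal (MvPolynomial (Fin n) ℂ)) [hP : P.IsPrime] [hQ : Q.IsPrime] (h : P ≤ Q) :
    pd Q ≤ pd P := by
  rcases h.eq_or_lt with rfl | h
  · exact le_rfl
  · exact (pd_lt P Q h).le

lemma pd_eq (P Q : Ideal (MvPolynomial (Fin n) ℂ)) [hP : P.IsPrime] [hQ : Q.IsPrime] (h : P ≤ Q)
    (h2 : pd P ≤ pd Q) : P = Q := by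
  rcases h.eq_or_lt with rfl | h
  · rfl
  · exact absurd (pd_lt P Q h) (by omega)

lemma E2 (P : Ideal (MvPolynomial (Fin n) ℂ)) [hP : P.IsPrime] (f : MvPolynomial (Fin n) ℂ)
    (Q : Ideal (MvPolynomial (Fin n) ℂ)) (hQ : Q ∈ (P ⊔ Ideal.span {f}).minimalPrimes) :
    pd P ≤ pd Q + 1 := by
  by_cases hf : f ∈ P
  · have : P ⊔ Ideal.span {f} = P := by simpa using hf
    rw [this, Ideal.minimalPrimes_eq_subsingleton_self] at hQ
    rw [hQ]; omega
  · rw [E1 P f hf Q hQ]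

/-- every prime `M` above `P` and finitely many `q`s contains a prime above them of large dimension -/
lemma E3 (l : List (MvPolynomial (Fin n) ℂ)) (P M : Ideal (MvPolynomial (Fin n) ℂ)) [hP : P.IsPrime]
    [hM : M.IsPrime] (hPM : P ≤ M) (h : ∀ q ∈ l, q ∈ M) :
    ∃ Q : Ideal (MvPolynomial (Fin n) ℂ), Q.IsPrime ∧ P ≤ Q ∧ (∀ q ∈ l, q ∈ Q) ∧ Q ≤ M ∧ pd P ≤ pd Q + l.length := by
  induction l with
  | nil => exact ⟨P, hP, le_rfl, by simp, hPM, by simp⟩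
  | cons f l ih =>
    obtain ⟨Q, hQ, h1, h2, h3, h4⟩ := ih (fun q hq => h q (by simp [hq]))
    obtain ⟨Q', hQ', h5⟩ := Ideal.exists_minimalPrimes_le (I := Q ⊔ Ideal.span {f}) (J := M)
      (sup_le h3 (by rw [Ideal.span_singleton_le_iff_mem]; exact h f (by simp)))
    have h6 := E2 Q f Q' hQ'
    have h7 : Q ≤ Q' := le_sup_left.trans hQ'.1.2
    refine ⟨Q', hQ'.1.1, h1.trans h7, ?_, h5, by simp; omega⟩
    intro q hq
    rcases List.mem_cons.1 hq with rfl | hq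
    · exact hQ'.1.2 (Ideal.mem_sup_right (Ideal.mem_span_singleton_self _))
    · exact h7 (h2 q hq)

end R

end Part3

section Part4


section D
variable {n : ℕ}

lemma mem_vi {V : Set (Fin n → ℂ)} {f : MvPolynomial (Fin n) ℂ} :
    f ∈ vanishingIdeal n V ↔ ∀ x ∈ V, eval x f = 0 := Iff.rfl

lemma mem_zl {S : Set (MvPolynomial (Fin n) ℂ)} {x : Fin n → ℂ} :
    x ∈ zeroLocus n S ↔ ∀ f ∈ S, eval x f = 0 := Iff.rfl

lemma vi_eq (V : Set (Fin n → ℂ)) : vanishingIdeal n V = MvPolynomial.vanishingIdeal ℂ V := by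
  ext f; rw [mem_vi, mem_vanishingIdeal_iff]; rfl

lemma zl_eq (P : Ideal (MvPolynomial (Fin n) ℂ)) :
    zeroLocus n (P : Set (MvPolynomial (Fin n) ℂ)) = MvPolynomial.zeroLocus ℂ P := by
  ext x; rw [mem_zl, mem_zeroLocus_iff]; rfl

lemma sub_zl {S : Set (MvPolynomial (Fin n) ℂ)} {V : Set (Fin n → ℂ)} :
    V ⊆ zeroLocus n S ↔ S ⊆ vanishingIdeal n V :=
  ⟨fun h f hf _ hx => h hx f hf, fun h x hx _ hf => h hf x hx⟩

lemma zl_anti {S T : Set (MvPolynomial (Fin n) ℂ)} (h : S ⊆ T) : zeroLocus n T ⊆ zeroLocus n S :=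
  fun _ hx f hf => hx f (h hf)

lemma vi_anti {V W : Set (Fin n → ℂ)} (h : V ⊆ W) : vanishingIdeal n W ≤ vanishingIdeal n V :=
  fun _ hf x hx => hf x (h hx)

lemma zl_vi {V : Set (Fin n → ℂ)} (h : IsAlgebraicSet n V) :
    zeroLocus n (vanishingIdeal n V : Set (MvPolynomial (Fin n) ℂ)) = V := by
  obtain ⟨S, rfl⟩ := h
  apply le_antisymm
  · exact zl_anti (sub_zl.1 subset_rfl)
  · exact sub_zl.2 subset_rfl

lemma sub_of_vi {V W : Set (Fin n → ℂ)} (h : IsAlgebraicSet n W)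
    (h2 : vanishingIdeal n W ≤ vanishingIdeal n V) : V ⊆ W := by
  rw [← zl_vi h]; exact sub_zl.2 h2

lemma vi_inj {V W : Set (Fin n → ℂ)} (hV : IsAlgebraicSet n V) (h : IsAlgebraicSet n W)
    (h2 : vanishingIdeal n W = vanishingIdeal n V) : V = W :=
  subset_antisymm (sub_of_vi h h2.le) (sub_of_vi hV h2.ge)

lemma irr_prime {V : Set (Fin n → ℂ)} (h : IsIrredVariety n V) : (vanishingIdeal n V).IsPrime := by
  obtain ⟨h1, ⟨x, hx⟩, h3⟩ := h
  refine ⟨fun h => ?_, ?_⟩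
  · have : (1 : MvPolynomial (Fin n) ℂ) ∈ vanishingIdeal n V := by rw [h]; trivial
    simpa using this x hx
  · intro f g hfg
    have hc : V ⊆ zeroLocus n {f} ∪ zeroLocus n {g} := by
      intro y hy
      have := hfg y hy
      rw [map_mul, mul_eq_zero] at this
      rcases this with h | h
      · left; rintro _ rfl; exact h
      · right; rintro _ rfl; exact h
    rcases h3 (zeroLocus n {f}) (zeroLocus n {g}) ⟨_, rfl⟩ ⟨_, rfl⟩ hc with h | h
    · left; exact sub_zl.1 h rfl
    · right; exact sub_zl.1 h rfl

lemma vi_zl (P : Ideal (MvPolynomial (Fin n) ℂ)) [hP : P.IsPrime] :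
    vanishingIdeal n (zeroLocus n (P : Set (MvPolynomial (Fin n) ℂ))) = P := by
  rw [zl_eq, vi_eq, IsPrime.vanishingIdeal_zeroLocus]

lemma irr_zl (P : Ideal (MvPolynomial (Fin n) ℂ)) [hP : P.IsPrime] :
    IsIrredVariety n (zeroLocus n (P : Set (MvPolynomial (Fin n) ℂ))) := by
  refine ⟨⟨_, rfl⟩, ?_, ?_⟩
  · rw [nonempty_iff_ne_empty]
    intro h
    have := vi_zl P
    rw [h] at this
    apply hP.ne_top
    rw [← this, eq_top_iff]
    intro f _ x hx
    exact hx.elim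
  · rintro _ _ ⟨S, rfl⟩ ⟨T, rfl⟩ h
    by_contra hc
    push Not at hc
    obtain ⟨h1, h2⟩ := hc
    rw [sub_zl, vi_zl, not_subset] at h1 h2
    obtain ⟨f, hf, hfP⟩ := h1
    obtain ⟨g, hg, hgP⟩ := h2
    have : f * g ∈ P := by
      rw [← vi_zl P]
      intro x hx
      rcases h hx with h | h
      · simp [h f hf]
      · simp [h g hg]
    rcases hP.mem_or_mem this with h | h
    · exact hfP h
    · exact hgP h

lemma chain_le {V : Set (Fin n → ℂ)} (hV : IsIrredVariety n V) {d : ℕ} (h : HasChain n V d) :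
    d ≤ pd (vanishingIdeal n V) := by
  obtain ⟨W, h1, h2, h3⟩ := h
  have key : ∀ k : ℕ, ∀ hk : k < d + 1, k ≤ pd (vanishingIdeal n (W ⟨k, hk⟩)) := by
    intro k
    induction k with
    | zero => intro _; omega
    | succ k ih =>
      intro hk
      have h4 := ih (by omega)
      have h5 := h2 ⟨k, by omega⟩ ⟨k+1, hk⟩ (by simp)
      have p1 := irr_prime (h1 ⟨k, by omega⟩)
      have p2 := irr_prime (h1 ⟨k+1, hk⟩)
      have h6 : vanishingIdeal n (W ⟨k+1, hk⟩) < vanishingIdeal n (W ⟨k, by omega⟩) := by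
        refine lt_of_le_of_ne (vi_anti h5.subset) fun h => ?_
        exact h5.ne (vi_inj (h1 _).1 (h1 _).1 h)
      have := pd_lt _ _ h6
      omega
  have p1 := irr_prime (h1 (Fin.last d))
  have p2 := irr_prime hV
  exact (key d (by omega)).trans (pd_le (hQ := p1) _ _ (vi_anti h3))

lemma has_chain {V : Set (Fin n → ℂ)} (hV : IsIrredVariety n V) :
    HasChain n V (pd (vanishingIdeal n V)) := by
  have p2 := irr_prime hV
  have h := pd_spec (vanishingIdeal n V)
  set d := pd (vanishingIdeal n V)
  obtain ⟨l, hl⟩ := Order.le_krullDim_iff.1 h.ge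
  have hl' : l.length + 1 = d + 1 := by omega
  let Q : Fin (d+1) → Ideal (MvPolynomial (Fin n) ℂ) := fun i =>
    (l (Fin.cast hl'.symm i.rev)).asIdeal.comap (Ideal.Quotient.mk (vanishingIdeal n V))
  have hQ : ∀ i, (Q i).IsPrime := fun i => Ideal.IsPrime.comap _
  refine ⟨fun i => zeroLocus n (Q i : Set (MvPolynomial (Fin n) ℂ)), fun i => irr_zl _, ?_, ?_⟩
  · intro i j hij
    have h1 : l (Fin.cast hl'.symm j.rev) < l (Fin.cast hl'.symm i.rev) := by
      apply l.strictMono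
      simp only [Fin.lt_def, Fin.val_cast, Fin.val_rev] at *
      omega
    have h2 : Q j < Q i := by
      refine lt_of_le_of_ne (Ideal.comap_mono h1.le) fun h => ?_
      have := Ideal.comap_injective_of_surjective _ Ideal.Quotient.mk_surjective h
      exact h1.ne (PrimeSpectrum.ext this)
    refine (zl_anti h2.le).ssubset_of_ne fun h => h2.ne ?_
    have := congrArg (vanishingIdeal n) h
    rw [vi_zl, vi_zl] at this
    exact this.symm
  · conv_rhs => rw [← zl_vi hV.1]
    apply zl_anti
    intro f hf
    simp only [Q, SetLike.mem_coe, Ideal.mem_comap]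
    rw [Ideal.Quotient.eq_zero_iff_mem.2 hf]
    exact zero_mem _

lemma dim_eq {V : Set (Fin n → ℂ)} (hV : IsIrredVariety n V) : dim n V = pd (vanishingIdeal n V) := by
  apply IsGreatest.csSup_eq
  exact ⟨has_chain hV, fun d hd => chain_le hV hd⟩

lemma comp_of_min {S : Set (MvPolynomial (Fin n) ℂ)} {Q : Ideal (MvPolynomial (Fin n) ℂ)}
    (hQ : Q ∈ (Ideal.span S).minimalPrimes) :
    IsIrredComponent n (zeroLocus n (Q : Set (MvPolynomial (Fin n) ℂ))) (zeroLocus n S) := by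
  have hp : Q.IsPrime := hQ.1.1
  refine ⟨irr_zl Q, zl_anti (Ideal.span_le.1 hQ.1.2), fun W hW h1 h2 => ?_⟩
  refine subset_antisymm ?_ h1
  apply sub_zl.2
  have h3 := vi_anti h1
  rw [vi_zl] at h3
  have h4 := sub_zl.1 h2
  exact hQ.2 ⟨irr_prime hW, Ideal.span_le.2 h4⟩ h3

lemma min_of_comp {S : Set (MvPolynomial (Fin n) ℂ)} {W : Set (Fin n → ℂ)}
    (h : IsIrredComponent n W (zeroLocus n S)) :
    vanishingIdeal n W ∈ (Ideal.span S).minimalPrimes := by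
  obtain ⟨h1, h2, h3⟩ := h
  refine ⟨⟨irr_prime h1, Ideal.span_le.2 (sub_zl.1 h2)⟩, ?_⟩
  rintro Q ⟨hQ, hSQ⟩ hle
  have h4 := h3 (zeroLocus n (Q : Set (MvPolynomial (Fin n) ℂ))) (irr_zl Q) (sub_of_vi ⟨_, rfl⟩ (by rwa [vi_zl]))
    (zl_anti (Ideal.span_le.1 hSQ))
  rw [← h4, vi_zl]

/-- ideal version of MaxCompDimEq -/
def mcd (J P : Ideal (MvPolynomial (Fin n) ℂ)) (e : ℕ) : Prop :=
  (∃ Q ∈ J.minimalPrimes, Q ≤ P ∧ pd Q = e) ∧ ∀ Q ∈ J.minimalPrimes, Q ≤ P → pd Q ≤ e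

lemma mcd_iff {S : Set (MvPolynomial (Fin n) ℂ)} {V : Set (Fin n → ℂ)} (e : ℕ) :
    MaxCompDimEq n (zeroLocus n S) V e ↔ mcd (Ideal.span S) (vanishingIdeal n V) e := by
  constructor
  · rintro ⟨⟨W, h1, h2, h3⟩, h4⟩
    refine ⟨⟨_, min_of_comp h1, vi_anti h2, by rw [← dim_eq h1.1, h3]⟩, fun Q hQ h => ?_⟩
    have hp : Q.IsPrime := hQ.1.1
    have := h4 _ (comp_of_min hQ) (sub_zl.2 h)
    rwa [dim_eq (irr_zl Q), vi_zl] at this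
  · rintro ⟨⟨Q, h1, h2, h3⟩, h4⟩
    have hp : Q.IsPrime := h1.1.1
    refine ⟨⟨_, comp_of_min h1, sub_zl.2 h2, by rw [dim_eq (irr_zl Q), vi_zl, h3]⟩, fun W hW h => ?_⟩
    rw [dim_eq hW.1]
    exact h4 _ (min_of_comp hW) (vi_anti h)

end D

end Part4

section Part5


section LB
variable {n : ℕ}

lemma pd_max (M : Ideal (MvPolynomial (Fin n) ℂ)) [hM : M.IsMaximal] : pd M = 0 := by
  have := hM.isPrime
  apply natcast_inj
  rw [← pd_spec, ringKrullDim_eq_zero_of_isField ((Ideal.Quotient.maximal_ideal_iff_isField_quotient M).1 hM)]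
  rfl

lemma pt_max (x : Fin n → ℂ) : (vanishingIdeal n {x}).IsMaximal := by
  rw [vi_eq, isMaximal_iff_eq_vanishingIdeal_singleton]
  exact ⟨x, rfl⟩

lemma mem_pt {x : Fin n → ℂ} {f : MvPolynomial (Fin n) ℂ} : f ∈ vanishingIdeal n {x} ↔ eval x f = 0 := by
  rw [mem_vi]; simp

lemma pd_fin (Q : Ideal (MvPolynomial (Fin n) ℂ)) [hQ : Q.IsPrime]
    (h : (zeroLocus n (Q : Set (MvPolynomial (Fin n) ℂ))).Finite) : pd Q = 0 := by
  have h1 : h.toFinset.inf (fun x => vanishingIdeal n {x}) ≤ Q := by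
    intro f hf
    rw [← vi_zl Q]
    intro x hx
    have : f ∈ vanishingIdeal n {x} := (Finset.inf_le (f := fun x => vanishingIdeal n {x}) (h.mem_toFinset.2 hx)) hf
    exact mem_pt.1 this
  rw [hQ.inf_le'] at h1
  obtain ⟨x, -, hx⟩ := h1
  have hm := pt_max x
  rw [← hm.eq_of_le hQ.ne_top hx]
  exact pd_max _

lemma exists_sep {N : ℕ} (p : Fin N → Fin n → ℂ) (hp : Function.Injective p) (i : Fin N) :
    ∃ g : MvPolynomial (Fin n) ℂ, eval (p i) g ≠ 0 ∧ ∀ j, j ≠ i → eval (p j) g = 0 := by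
  have : ∀ j, ∃ g : MvPolynomial (Fin n) ℂ, j ≠ i → eval (p i) g ≠ 0 ∧ eval (p j) g = 0 := by
    intro j
    by_cases hj : j = i
    · exact ⟨0, fun h => absurd hj h⟩
    · have h1 : p i ≠ p j := fun h => hj (hp h).symm
      obtain ⟨k, hk⟩ := Function.ne_iff.1 h1
      refine ⟨X k - C (p j k), fun _ => ⟨by simpa [sub_eq_zero] using hk, by simp⟩⟩
  choose g hg using this
  refine ⟨∏ j ∈ Finset.univ.erase i, g j, ?_, ?_⟩
  · rw [map_prod, Finset.prod_ne_zero_iff]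
    intro j hj
    exact (hg j (Finset.ne_of_mem_erase hj)).1
  · intro j hj
    rw [map_prod]
    exact Finset.prod_eq_zero (Finset.mem_erase.2 ⟨hj, Finset.mem_univ _⟩) (hg j hj).2

lemma exists_ne {d : ℕ} (h : MvPolynomial (Fin d) ℂ) (hh : h ≠ 0) : ∃ v, eval v h ≠ 0 := by
  by_contra hc
  push Not at hc
  exact hh (MvPolynomial.funext fun x => by simp [hc x])

lemma lower_core {P : Ideal (MvPolynomial (Fin n) ℂ)} [hP : P.IsPrime] {d N : ℕ} (hd : pd P = d)
    (l : Fin d → MvPolynomial (Fin n) ℂ) (p : Fin N → Fin n → ℂ)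
    (hpP : ∀ i, P ≤ vanishingIdeal n {p i}) (hpl : ∀ i j, eval (p i) (l j) = 0)
    (hall : (zeroLocus n ((P : Set (MvPolynomial (Fin n) ℂ)) ∪ range l)).Finite)
    (g : Fin N → MvPolynomial (Fin n) ℂ) (hg1 : ∀ i, eval (p i) (g i) ≠ 0)
    (hg2 : ∀ i j, j ≠ i → eval (p j) (g i) = 0) (h : Fin N → MvPolynomial (Fin d) ℂ)
    (hh : ∑ i, g i * aeval l (h i) ∈ P) : h = 0 := by
  by_contra hne
  obtain ⟨i0, hi0⟩ := Function.ne_iff.1 hne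
  have hev : ∀ i, ∀ u : Fin N → MvPolynomial (Fin n) ℂ, eval (p i) (∑ i, g i * u i) = eval (p i) (g i) * eval (p i) (u i) := by
    intro i u
    rw [map_sum, Finset.sum_eq_single i]
    · simp
    · intro j _ hj
      rw [map_mul, hg2 j i hj.symm, zero_mul]
    · simp
  cases d with
  | zero =>
    have h1 := mem_pt.1 (hpP i0 hh)
    rw [hev i0 fun i => aeval l (h i)] at h1
    have h2 := (mul_eq_zero.1 h1).resolve_left (hg1 i0)
    rw [eq_C_of_isEmpty (h i0)] at h2 hi0
    rw [aeval_C, algebraMap_eq, eval_C] at h2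
    rw [h2] at hi0
    simp at hi0
  | succ d =>
    obtain ⟨v, hv⟩ := exists_ne (h i0 * X 0) (mul_ne_zero hi0 (X_ne_zero 0))
    rw [map_mul, eval_X, mul_ne_zero_iff] at hv
    obtain ⟨hv1, hv0⟩ := hv
    let φ : Fin N → Polynomial ℂ := fun i => aeval (fun j => Polynomial.C (v j) * Polynomial.X) (h i)
    have hφ : φ i0 ≠ 0 := by
      intro hc
      apply hv1
      have h1 : Polynomial.aeval (1:ℂ) (φ i0) = 0 := by rw [hc]; simp
      have h2 : ((Polynomial.aeval (1:ℂ)).comp (aeval (R := ℂ) (fun j => Polynomial.C (v j) * Polynomial.X))) = aeval v := by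
        ext j; simp
      have h3 := DFunLike.congr_fun h2 (h i0)
      rw [AlgHom.comp_apply, aeval_eq_eval] at h3
      rw [← h3]; exact h1
    have hex : ∃ a i, (φ i).coeff a ≠ 0 := by
      by_contra hc
      push Not at hc
      exact hφ (Polynomial.ext fun a => by simp [hc a i0])
    classical
    let a := Nat.find hex
    obtain ⟨i1, hi1⟩ : ∃ i, (φ i).coeff a ≠ 0 := Nat.find_spec hex
    have hdiv : ∀ i, ∃ ψ, φ i = Polynomial.X ^ a * ψ := by
      intro i
      rw [← dvd_def, Polynomial.X_pow_dvd_iff]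
      intro b hb
      have := Nat.find_min hex hb
      push Not at this
      exact this i
    choose ψ hψ using hdiv
    have hψ0 : (ψ i1).coeff 0 ≠ 0 := by
      have h0 := Polynomial.coeff_X_pow_mul (ψ i1) a 0
      rw [zero_add, ← hψ i1] at h0
      rwa [← h0]
    let t : MvPolynomial (Fin n) ℂ := C (v 0)⁻¹ * l 0
    have ht0 : ∀ i, eval (p i) t = 0 := fun i => by simp [t, hpl]
    have hM := (pt_max (p i1)).isPrime
    obtain ⟨Q, hQ, h1, h2, h3, h4⟩ := E3 (List.ofFn fun j : Fin d => l j.succ - C (v j.succ) * t) P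
      (vanishingIdeal n {p i1}) (hpP i1) (by
        intro q hq
        rw [List.mem_ofFn] at hq
        obtain ⟨j, rfl⟩ := hq
        rw [mem_pt]
        simp [hpl, ht0])
    have h5 : ∀ j, l j - C (v j) * t ∈ Q := by
      intro j
      refine Fin.cases ?_ (fun j => ?_) j
      · have : l 0 - C (v 0) * t = 0 := by
          simp only [t]
          rw [← mul_assoc, ← C_mul, mul_inv_cancel₀ hv0, C_1, one_mul, sub_self]
        rw [this]; exact zero_mem _
      · exact h2 _ (by rw [List.mem_ofFn]; exact ⟨j, rfl⟩)
    have h6 : ∀ i, aeval l (h i) - Polynomial.aeval t (φ i) ∈ Q := by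
      intro i
      rw [← Ideal.Quotient.eq]
      have h7 : (Ideal.Quotient.mkₐ ℂ Q).comp (aeval l) =
        (Ideal.Quotient.mkₐ ℂ Q).comp ((Polynomial.aeval t).comp
          (aeval (R := ℂ) (fun j => Polynomial.C (v j) * Polynomial.X))) := by
        ext j
        simp only [AlgHom.comp_apply, aeval_X, map_mul, Polynomial.aeval_C, Polynomial.aeval_X]
        rw [← map_mul]
        exact Ideal.Quotient.eq.2 (h5 j)
      exact DFunLike.congr_fun h7 (h i)
    have h8 : t ^ a * ∑ i, g i * Polynomial.aeval t (ψ i) ∈ Q := by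
      have h9 : t ^ a * ∑ i, g i * Polynomial.aeval t (ψ i) = ∑ i, g i * aeval l (h i) - ∑ i, g i * (aeval l (h i) - Polynomial.aeval t (φ i)) := by
        rw [← Finset.sum_sub_distrib, Finset.mul_sum]
        refine Finset.sum_congr rfl fun i _ => ?_
        rw [hψ i]
        simp only [map_mul, map_pow, Polynomial.aeval_X]
        ring
      rw [h9]
      exact Q.sub_mem (h1 hh) (Q.sum_mem fun i _ => Q.mul_mem_left _ (h6 i))
    have h10 : ∑ i, g i * Polynomial.aeval t (ψ i) ∉ Q := by
      intro hc
      have := mem_pt.1 (h3 hc)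
      rw [hev i1 fun i => Polynomial.aeval t (ψ i)] at this
      have := (mul_eq_zero.1 this).resolve_left (hg1 i1)
      have h11 := Polynomial.aeval_algHom_apply (aeval (R := ℂ) (p i1)) t (ψ i1)
      rw [aeval_eq_eval] at h11
      rw [show (eval (p i1)) ((Polynomial.aeval t) (ψ i1)) = Polynomial.aeval (eval (p i1) t) (ψ i1) from h11.symm, ht0,
        Polynomial.aeval_def, Polynomial.eval₂_at_zero] at this
      exact hψ0 (by simpa using this)
    have h12 : t ∈ Q := hQ.mem_of_pow_mem _ ((hQ.mem_or_mem h8).resolve_right h10)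
    have h13 : ∀ j, l j ∈ Q := fun j => by
      have := Q.add_mem (h5 j) (Q.mul_mem_left (C (v j)) h12)
      simpa using this
    have h14 := pd_fin Q (hall.subset (zl_anti (union_subset h1 (by rintro _ ⟨j, rfl⟩; exact h13 j))))
    rw [List.length_ofFn] at h4
    omega

lemma exists_lin {d : ℕ} (hd : d ≤ n) (L : AffineSubspace ℂ (Fin n → ℂ)) (hL : Module.finrank ℂ L.direction = n - d)
    (x0 : Fin n → ℂ) (hx0 : x0 ∈ L) :
    ∃ l : Fin d → MvPolynomial (Fin n) ℂ, (∀ j, (l j).totalDegree ≤ 1) ∧ ∀ x, x ∈ L ↔ ∀ j, eval x (l j) = 0 := by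
  have hq : Module.finrank ℂ ((Fin n → ℂ) ⧸ L.direction) = d := by
    have := Submodule.finrank_quotient_add_finrank L.direction
    rw [hL, Module.finrank_fin_fun] at this
    omega
  let b := Module.finBasisOfFinrankEq ℂ _ hq
  let φ : (Fin n → ℂ) →ₗ[ℂ] (Fin d → ℂ) := b.equivFun.toLinearMap.comp L.direction.mkQ
  have hφ : ∀ x, φ x = 0 ↔ x ∈ L.direction := by
    intro x
    simp [φ]
  refine ⟨fun j => ∑ i, C (φ (Pi.single i 1) j) * X i - C (φ x0 j), ?_, ?_⟩
  · intro j
    refine (totalDegree_sub _ _).trans (max_le ?_ (by simp))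
    refine totalDegree_finsetSum_le fun i _ => ?_
    refine (totalDegree_mul _ _).trans ?_
    simp
  · intro x
    have h1 : ∀ j, eval x (∑ i, C (φ (Pi.single i 1) j) * X i - C (φ x0 j)) = φ (x - x0) j := by
      intro j
      have h2 : φ x = ∑ i, x i • φ (Pi.single i 1) := by
        conv_lhs => rw [pi_eq_sum_univ x, map_sum]
        refine Finset.sum_congr rfl fun i _ => ?_
        rw [map_smul]
        congr 2
        ext j
        simp [Pi.single_apply, eq_comm]
      rw [map_sub φ, h2]
      simp [mul_comm]
    simp only [h1]
    have h3 : (∀ j, φ (x - x0) j = 0) ↔ φ (x - x0) = 0 := by rw [funext_iff]; rfl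
    rw [h3, hφ, ← vsub_eq_sub, ← AffineSubspace.vsub_right_mem_direction_iff_mem hx0]

end LB

end Part5

section Part6


section HB

def degEquiv (e m : ℕ) : {d : Fin e →₀ ℕ | (d.sum fun _ k => k) ≤ m} ≃
    (Finset.univ : Finset (Fin (e+1))).finsuppAntidiag m where
  toFun d := ⟨Finsupp.cons (m - d.1.sum fun _ k => k) d.1, by
    have := d.2
    rw [Set.mem_ofPred_eq, Finsupp.sum_fintype _ _ (by simp)] at this
    simp only [Finset.mem_finsuppAntidiag, Fin.sum_univ_succ, Finsupp.cons_zero, Finsupp.cons_succ]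
    refine ⟨?_, by simp⟩
    rw [Finsupp.sum_fintype _ _ (by simp)]
    omega⟩
  invFun f := ⟨Finsupp.tail f.1, by
    have := f.2
    simp only [Finset.mem_finsuppAntidiag, Fin.sum_univ_succ] at this
    rw [Set.mem_ofPred_eq, Finsupp.sum_fintype _ _ (by simp)]
    simp only [Finsupp.tail_apply]
    omega⟩
  left_inv d := by simp
  right_inv f := by
    have := f.2
    simp only [Finset.mem_finsuppAntidiag, Fin.sum_univ_succ] at this
    apply Subtype.ext
    ext i
    refine Fin.cases ?_ (fun i => ?_) i
    · simp only [Finsupp.cons_zero]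
      rw [Finsupp.sum_fintype _ _ (by simp)]
      simp only [Finsupp.tail_apply]
      omega
    · rw [Finsupp.cons_succ, Finsupp.tail_apply]

instance rtd_fin (e m : ℕ) : FiniteDimensional ℂ (restrictTotalDegree (Fin e) ℂ m) := by
  have : Finite {d : Fin e →₀ ℕ | (d.sum fun _ k => k) ≤ m} := Finite.of_equiv _ (degEquiv e m).symm
  exact Module.Basis.finiteDimensional_of_finite (basisRestrictSupport ℂ {d : Fin e →₀ ℕ | (d.sum fun _ k => k) ≤ m})

lemma rtd_finrank (e m : ℕ) : Module.finrank ℂ (restrictTotalDegree (Fin e) ℂ m) = (m + e).choose e := by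
  have h := Module.finrank_eq_nat_card_basis (basisRestrictSupport ℂ {d : Fin e →₀ ℕ | (d.sum fun _ k => k) ≤ m})
  refine h.trans ?_
  rw [Nat.card_congr (degEquiv e m), Nat.card_eq_fintype_card, Fintype.card_coe,
    Finset.card_finsuppAntidiag_nat_eq_choose]
  simp only [Finset.card_univ, Fintype.card_fin]
  rw [show e + 1 + m - 1 = m + e by omega, ← Nat.choose_symm_add]

variable {n : ℕ}

def hb (P : Ideal (MvPolynomial (Fin n) ℂ)) (m : ℕ) : ℕ :=
  Module.finrank ℂ
    (Submodule.map (Ideal.Quotient.mkₐ ℂ P).toLinearMap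
      (restrictTotalDegree (Fin n) ℂ m))

lemma hb_eq (V : Set (Fin n → ℂ)) (m : ℕ) : hilbert n V m = hb (vanishingIdeal n V) m := rfl

lemma rtd_mono {e : ℕ} {m m' : ℕ} (h : m ≤ m') : restrictTotalDegree (Fin e) ℂ m ≤ restrictTotalDegree (Fin e) ℂ m' := by
  intro f hf
  rw [mem_restrictTotalDegree] at *
  omega

lemma hb_mono (P : Ideal (MvPolynomial (Fin n) ℂ)) : Monotone (hb P) := by
  intro m m' h
  exact Submodule.finrank_mono (Submodule.map_mono (rtd_mono h))

lemma map_factor {P Q : Ideal (MvPolynomial (Fin n) ℂ)} (h : P ≤ Q) (m : ℕ) :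
    ((restrictTotalDegree (Fin n) ℂ m).map (Ideal.Quotient.mkₐ ℂ P).toLinearMap).map
      (Ideal.Quotient.factorₐ ℂ h).toLinearMap =
    (restrictTotalDegree (Fin n) ℂ m).map (Ideal.Quotient.mkₐ ℂ Q).toLinearMap := by
  rw [← Submodule.map_comp]
  congr 1

lemma hb_le {P Q : Ideal (MvPolynomial (Fin n) ℂ)} (h : P ≤ Q) (m : ℕ) : hb Q m ≤ hb P m := by
  rw [hb, hb, ← map_factor h]
  exact Submodule.finrank_map_le _ _

lemma hb_ge {P Q : Ideal (MvPolynomial (Fin n) ℂ)} (h : P ≤ Q) (m : ℕ)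
    (h2 : ∀ f ∈ Q, f.totalDegree ≤ m → f ∈ P) : hb P m ≤ hb Q m := by
  rw [hb, hb, ← map_factor h]
  refine (LinearMap.finrank_le_finrank_of_injective (f := (Ideal.Quotient.factorₐ ℂ h).toLinearMap.submoduleMap _) ?_)
  rw [← LinearMap.ker_eq_bot, LinearMap.ker_eq_bot']
  rintro ⟨_, f, hf, rfl⟩ hx
  have hx' := congrArg Subtype.val hx
  rw [LinearMap.submoduleMap_coe_apply] at hx'
  have : f ∈ Q := by
    rw [← Ideal.Quotient.eq_zero_iff_mem]
    exact hx'
  apply Subtype.ext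
  exact Ideal.Quotient.eq_zero_iff_mem.2 (h2 f this ((mem_restrictTotalDegree _ _ _).1 hf))

lemma bez {P Q : Ideal (MvPolynomial (Fin n) ℂ)} [hP : P.IsPrime] (h : P ≤ Q) (f : MvPolynomial (Fin n) ℂ)
    (hfP : f ∉ P) (hfQ : f ∈ Q) (δ : ℕ) (hδ : f.totalDegree ≤ δ) (m : ℕ) :
    hb P m + hb Q (m + δ) ≤ hb P (m + δ) := by
  set S := (restrictTotalDegree (Fin n) ℂ (m+δ)).map (Ideal.Quotient.mkₐ ℂ P).toLinearMap with hS
  set S0 := (restrictTotalDegree (Fin n) ℂ m).map (Ideal.Quotient.mkₐ ℂ P).toLinearMap with hS0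
  let T := (Ideal.Quotient.factorₐ ℂ h).toLinearMap
  have h1 := LinearMap.finrank_range_add_finrank_ker (T.domRestrict S)
  have h2 : Module.finrank ℂ (LinearMap.range (T.domRestrict S)) = hb Q (m+δ) := by
    rw [LinearMap.range_domRestrict, map_factor, hb]
  have h3 : Module.finrank ℂ S0 ≤ Module.finrank ℂ (LinearMap.ker (T.domRestrict S)) := by
    let F : (MvPolynomial (Fin n) ℂ ⧸ P) →ₗ[ℂ] (MvPolynomial (Fin n) ℂ ⧸ P) :=
      LinearMap.mulLeft ℂ (Ideal.Quotient.mk P f)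
    have hF : ∀ x : S0, F x ∈ S := by
      rintro ⟨_, g, hg, rfl⟩
      refine ⟨f * g, ?_, by simp [F]⟩
      simp only [SetLike.mem_coe, mem_restrictTotalDegree] at *
      exact (totalDegree_mul f g).trans (by omega)
    have hT : ∀ x, T (F x) = 0 := by
      intro x
      simp only [T, F, LinearMap.mulLeft_apply, AlgHom.toLinearMap_apply, map_mul]
      have : (Ideal.Quotient.factorₐ ℂ h) (Ideal.Quotient.mk P f) = 0 := by
        change Ideal.Quotient.mk Q f = 0
        exact Ideal.Quotient.eq_zero_iff_mem.2 hfQ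
      rw [this, zero_mul]
    let G : S0 →ₗ[ℂ] LinearMap.ker (T.domRestrict S) :=
      LinearMap.codRestrict _ (LinearMap.codRestrict S (F.comp S0.subtype) hF) (fun x => hT x)
    refine LinearMap.finrank_le_finrank_of_injective (f := G) ?_
    intro x y hxy
    have h4 : F x = F y := congrArg (fun z : LinearMap.ker (T.domRestrict S) => ((z : S) : MvPolynomial (Fin n) ℂ ⧸ P)) hxy
    apply Subtype.ext
    exact mul_left_cancel₀ (by rwa [Ne, Ideal.Quotient.eq_zero_iff_mem]) h4
  rw [h2] at h1
  change Module.finrank ℂ S0 + _ ≤ Module.finrank ℂ S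
  omega

lemma bez_sum {P Q : Ideal (MvPolynomial (Fin n) ℂ)} [hP : P.IsPrime] (h : P ≤ Q) (f : MvPolynomial (Fin n) ℂ)
    (hfP : f ∉ P) (hfQ : f ∈ Q) (δ : ℕ) (hδ : f.totalDegree ≤ δ) (hδ1 : 1 ≤ δ) (M : ℕ) :
    ∑ j ∈ Finset.range (M+1), hb Q j ≤ δ * hb P M := by
  induction M using Nat.strong_induction_on with
  | _ M ih =>
    by_cases hM : M < δ
    · calc ∑ j ∈ Finset.range (M+1), hb Q j ≤ ∑ j ∈ Finset.range (M+1), hb P M := by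
            refine Finset.sum_le_sum fun j hj => (hb_le h j).trans (hb_mono P ?_)
            rw [Finset.mem_range] at hj; omega
        _ = (M+1) * hb P M := by simp
        _ ≤ _ := Nat.mul_le_mul_right _ hM
    · push Not at hM
      obtain ⟨m, rfl⟩ := Nat.exists_eq_add_of_le' hM
      have h1 := ih m (by omega)
      have h2 := bez h f hfP hfQ δ hδ m
      rw [show m + δ + 1 = (m + 1) + δ by ring, Finset.sum_range_add]
      have h3 : ∑ x ∈ Finset.range δ, hb Q (m + 1 + x) ≤ δ * hb Q (m + δ) := by
        calc _ ≤ ∑ x ∈ Finset.range δ, hb Q (m + δ) := by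
              refine Finset.sum_le_sum fun j hj => hb_mono Q ?_
              rw [Finset.mem_range] at hj; omega
          _ = _ := by simp
      calc _ ≤ δ * hb P m + δ * hb Q (m + δ) := add_le_add h1 h3
        _ = δ * (hb P m + hb Q (m + δ)) := by ring
        _ ≤ _ := Nat.mul_le_mul_left _ h2

lemma bez_choose {P Q : Ideal (MvPolynomial (Fin n) ℂ)} [hP : P.IsPrime] (h : P ≤ Q) (f : MvPolynomial (Fin n) ℂ)
    (hfP : f ∉ P) (hfQ : f ∈ Q) (δ : ℕ) (hδ : f.totalDegree ≤ δ) (hδ1 : 1 ≤ δ) (N D K e : ℕ)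
    (hN : ∀ m, N * (m + e).choose e ≤ D * hb Q (m + K)) (m : ℕ) :
    N * (m + (e + 1)).choose (e + 1) ≤ D * δ * hb P (m + K) := by
  have h1 := bez_sum h f hfP hfQ δ hδ hδ1 (m + K)
  have h3 : ∑ i ∈ Finset.range (m+1), (i + e).choose e = (m + e + 1).choose (e + 1) :=
    Nat.sum_range_add_choose m e
  calc N * (m + (e + 1)).choose (e + 1) = ∑ i ∈ Finset.range (m+1), N * (i + e).choose e := by
        rw [← Finset.mul_sum, h3]; rfl
    _ ≤ ∑ i ∈ Finset.range (m+1), D * hb Q (i + K) := Finset.sum_le_sum fun i _ => hN i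
    _ = D * ∑ i ∈ Finset.range (m+1), hb Q (K + i) := by
        rw [Finset.mul_sum]; exact Finset.sum_congr rfl fun i _ => by rw [add_comm]
    _ ≤ D * ∑ j ∈ Finset.range (m+K+1), hb Q j := by
        apply Nat.mul_le_mul_left
        rw [show m + K + 1 = K + (m+1) by ring, Finset.sum_range_add _ K (m+1)]
        exact Nat.le_add_left _ _
    _ ≤ D * (δ * hb P (m+K)) := Nat.mul_le_mul_left _ h1
    _ = _ := by ring

lemma lower {V : Set (Fin n → ℂ)} (hV : IsIrredVariety n V) (L : AffineSubspace ℂ (Fin n → ℂ))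
    (hL : Module.finrank ℂ L.direction = n - dim n V) (hfin : (V ∩ ↑L).Finite) :
    ∃ K, ∀ m, (V ∩ ↑L).ncard * (m + dim n V).choose (dim n V) ≤ hb (vanishingIdeal n V) (m + K) := by
  have hP := irr_prime hV
  set N := (V ∩ ↑L).ncard with hN
  rcases Nat.eq_zero_or_pos N with h0 | h0
  · exact ⟨0, fun m => by rw [h0]; simp⟩
  obtain ⟨x0, hx0⟩ := (Set.ncard_pos hfin).1 h0
  set d := dim n V with hd
  have hdp : pd (vanishingIdeal n V) = d := by rw [hd, dim_eq hV]
  have hdn : d ≤ n := by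
    have h := pd_le (⊥ : Ideal (MvPolynomial (Fin n) ℂ)) (vanishingIdeal n V) bot_le
    rwa [pd_bot, hdp] at h
  obtain ⟨l, hl1, hl2⟩ := exists_lin hdn L hL x0 hx0.2
  have : Fintype (V ∩ ↑L : Set (Fin n → ℂ)) := hfin.fintype
  have hcard : Fintype.card (V ∩ ↑L : Set (Fin n → ℂ)) = N := by
    rw [hN, Set.ncard_eq_toFinset_card', Set.toFinset_card]
  let E := (Fintype.equivFinOfCardEq hcard).symm
  let p : Fin N → Fin n → ℂ := fun i => (E i).1
  have hp : ∀ i, p i ∈ V ∩ L := fun i => (E i).2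
  choose g hg1 hg2 using exists_sep p (fun i j h => E.injective (Subtype.ext h))
  let K := Finset.univ.sup fun i => (g i).totalDegree
  refine ⟨K, fun m => ?_⟩
  let Ψ : (Fin N → MvPolynomial (Fin d) ℂ) →ₗ[ℂ] MvPolynomial (Fin n) ℂ :=
    ∑ i, (LinearMap.mulLeft ℂ (g i)).comp ((aeval l).toLinearMap.comp (LinearMap.proj i))
  have hΨ : ∀ h, Ψ h = ∑ i, g i * aeval l (h i) := by intro h; simp [Ψ]
  let S : Submodule ℂ (MvPolynomial (Fin n) ℂ ⧸ vanishingIdeal n V) :=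
    (restrictTotalDegree (Fin n) ℂ (m+K)).map (Ideal.Quotient.mkₐ ℂ (vanishingIdeal n V)).toLinearMap
  let ι : (Fin N → restrictTotalDegree (Fin d) ℂ m) →ₗ[ℂ] (Fin N → MvPolynomial (Fin d) ℂ) :=
    LinearMap.pi fun i => (restrictTotalDegree (Fin d) ℂ m).subtype.comp (LinearMap.proj i)
  have hdeg : ∀ h, (Ψ (ι h)).totalDegree ≤ m + K := by
    intro h
    rw [hΨ]
    refine totalDegree_finsetSum_le fun i _ => ?_
    refine (totalDegree_mul _ _).trans ?_
    have h1 : (g i).totalDegree ≤ K := Finset.le_sup (f := fun i => (g i).totalDegree) (Finset.mem_univ i)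
    have h2 : (aeval l (ι h i)).totalDegree ≤ m := by
      have h3 : (ι h i).totalDegree ≤ m := (mem_restrictTotalDegree _ _ _).1 (h i).2
      refine (?_ : _ ≤ (ι h i).totalDegree).trans h3
      rw [aeval_def, eval₂_eq]
      refine totalDegree_finsetSum_le fun a ha => ?_
      refine (totalDegree_mul _ _).trans ?_
      rw [algebraMap_eq, totalDegree_C, zero_add]
      refine (totalDegree_finsetProd _ _).trans ?_
      refine le_trans ?_ (le_totalDegree ha)
      refine Finset.sum_le_sum fun j _ => ?_
      refine (totalDegree_pow _ _).trans ?_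
      have := Nat.mul_le_mul_left (a j) (hl1 j)
      simpa using this
    omega
  let G : (Fin N → restrictTotalDegree (Fin d) ℂ m) →ₗ[ℂ] S :=
    LinearMap.codRestrict S ((Ideal.Quotient.mkₐ ℂ (vanishingIdeal n V)).toLinearMap.comp (Ψ.comp ι))
      (fun h => ⟨Ψ (ι h), by rw [SetLike.mem_coe, mem_restrictTotalDegree]; exact hdeg h, rfl⟩)
  have hG : Function.Injective G := by
    rw [← LinearMap.ker_eq_bot, LinearMap.ker_eq_bot']
    intro h hh
    have h1 := congrArg Subtype.val hh
    have h2 : Ψ (ι h) ∈ vanishingIdeal n V := Ideal.Quotient.eq_zero_iff_mem.1 h1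
    rw [hΨ] at h2
    have h3 := lower_core hdp l p (fun i => vi_anti (by simpa using (hp i).1))
      (fun i j => (hl2 _).1 (hp i).2 j) (hfin.subset ?_) g hg1 (fun i j hj => hg2 i j hj) (ι h) h2
    · ext i : 2
      exact congrFun h3 i
    · intro x hx
      refine ⟨?_, (hl2 x).2 fun j => hx _ (Or.inr ⟨j, rfl⟩)⟩
      rw [← zl_vi hV.1]
      exact fun f hf => hx f (Or.inl hf)
  have := LinearMap.finrank_le_finrank_of_injective hG
  rw [Module.finrank_pi_fintype] at this
  simp only [rtd_finrank, Finset.sum_const, Finset.card_univ, Fintype.card_fin, smul_eq_mul] at this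
  exact this

end HB

end Part6

section Part7


section Prim
variable {A B : Type*} [CommRing A] [IsDomain A] [IsIntegrallyClosed A] [CharZero A] [CommRing B] [IsDomain B]
  [Algebra A B] [Module.Finite A B] [FaithfulSMul A B]

attribute [local instance] FractionRing.liftAlgebra in
lemma prim_elt : ∃ θ : B, (∀ b : B, ∃ h : A, h ≠ 0 ∧ ∃ G : Polynomial A, h • b = Polynomial.aeval θ G) ∧
    ∃ h' : A, h' ≠ 0 ∧ ∃ a b : Polynomial A, a * minpoly A θ + b * Polynomial.derivative (minpoly A θ) = Polynomial.C h' := by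
  let K := FractionRing A
  let L := FractionRing B
  have i1 : IsLocalization (Algebra.algebraMapSubmonoid B (nonZeroDivisors A)) L := inferInstance
  have i2 : FiniteDimensional K L := .of_isLocalization A B (nonZeroDivisors A)
  have i3 : CharZero K := inferInstance
  obtain ⟨α, hα⟩ := Field.exists_primitive_element K L
  obtain ⟨⟨θ, ⟨_, a, ha, rfl⟩⟩, hθ⟩ := IsLocalization.surj (Algebra.algebraMapSubmonoid B (nonZeroDivisors A)) α
  simp only at hθ
  have hint : IsIntegral A θ := Algebra.IsIntegral.isIntegral θ
  have ha0 : algebraMap A L a ≠ 0 := by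
    simpa using nonZeroDivisors.ne_zero ha
  have htop : IntermediateField.adjoin K {algebraMap B L θ} = ⊤ := by
    rw [eq_top_iff, ← hα, IntermediateField.adjoin_simple_le_iff]
    have : α = algebraMap B L θ * (algebraMap K L (algebraMap A K a))⁻¹ := by
      rw [← IsScalarTower.algebraMap_apply, eq_mul_inv_iff_mul_eq₀ ha0, ← hθ, ← IsScalarTower.algebraMap_apply]
    rw [this]
    exact mul_mem (IntermediateField.mem_adjoin_simple_self _ _) (inv_mem (algebraMap_mem _ _))
  have hK : ∀ x : L, ∃ g : Polynomial K, Polynomial.aeval (algebraMap B L θ) g = x := by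
    intro x
    have hx : x ∈ IntermediateField.adjoin K {algebraMap B L θ} := by rw [htop]; trivial
    rw [← IntermediateField.mem_toSubalgebra, IntermediateField.adjoin_simple_toSubalgebra_of_isAlgebraic
      (Algebra.IsAlgebraic.isAlgebraic _), Algebra.adjoin_singleton_eq_range_aeval] at hx
    exact hx
  refine ⟨θ, fun b => ?_, ?_⟩
  · obtain ⟨g, hg⟩ := hK (algebraMap B L b)
    obtain ⟨h, hh, hG⟩ := IsLocalization.integerNormalization_spec (nonZeroDivisors A) g
    refine ⟨h, nonZeroDivisors.ne_zero hh, IsLocalization.integerNormalization (nonZeroDivisors A) g, ?_⟩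
    apply IsFractionRing.injective B L
    rw [← Polynomial.aeval_algebraMap_apply, ← Polynomial.aeval_map_algebraMap K, hG, ← algebraMap_smul K h g, Polynomial.smul_eq_C_mul, map_mul, Polynomial.aeval_C, hg, ← Algebra.smul_def, algebraMap_smul]
    rw [Algebra.smul_def, map_mul, Algebra.smul_def, ← IsScalarTower.algebraMap_apply]
  · have hmp := minpoly.isIntegrallyClosed_eq_field_fractions K L hint
    have hsep : (minpoly K (algebraMap B L θ)).Separable := Algebra.IsSeparable.isSeparable K _
    rw [hmp] at hsep
    obtain ⟨a, b, hab⟩ := hsep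
    obtain ⟨h1, hh1, hG1⟩ := IsLocalization.integerNormalization_spec (nonZeroDivisors A) a
    obtain ⟨h2, hh2, hG2⟩ := IsLocalization.integerNormalization_spec (nonZeroDivisors A) b
    refine ⟨h1 * h2, nonZeroDivisors.ne_zero (mul_mem hh1 hh2),
      Polynomial.C h2 * IsLocalization.integerNormalization (nonZeroDivisors A) a,
      Polynomial.C h1 * IsLocalization.integerNormalization (nonZeroDivisors A) b, ?_⟩
    apply Polynomial.map_injective (algebraMap A K) (IsFractionRing.injective A K)
    simp only [Polynomial.map_add, Polynomial.map_mul, Polynomial.map_C, hG1, hG2, ← Polynomial.derivative_map]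
    rw [← algebraMap_smul K h1 a, ← algebraMap_smul K h2 b, Polynomial.smul_eq_C_mul, Polynomial.smul_eq_C_mul]
    rw [map_mul, map_mul]
    linear_combination (Polynomial.C (algebraMap A K h1) * Polynomial.C (algebraMap A K h2)) * hab

end Prim
section PrimFin
variable {A B : Type*} [CommRing A] [IsDomain A] [CommRing B] [Algebra A B]

lemma prim_fin (θ : B) (hθ : ∀ b : B, ∃ h : A, h ≠ 0 ∧ ∃ G : Polynomial A, h • b = Polynomial.aeval θ G)
    (S : Finset B) : ∃ h : A, h ≠ 0 ∧ ∀ u ∈ S, ∃ G : Polynomial A, h • u = Polynomial.aeval θ G := by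
  classical
  induction S using Finset.induction_on with
  | empty => exact ⟨1, one_ne_zero, by simp⟩
  | insert b S _ ih =>
    obtain ⟨h, h0, hS⟩ := ih
    obtain ⟨h1, h10, G1, hG1⟩ := hθ b
    refine ⟨h * h1, mul_ne_zero h0 h10, fun u hu => ?_⟩
    rcases Finset.mem_insert.1 hu with rfl | hu
    · exact ⟨h • G1, by rw [mul_smul, hG1, map_smul]⟩
    · obtain ⟨G, hG⟩ := hS u hu
      exact ⟨h1 • G, by rw [mul_comm, mul_smul, hG, map_smul]⟩

end PrimFin

lemma max_hom {B : Type*} [CommRing B] [Algebra ℂ B] [Algebra.FiniteType ℂ B] (Q : Ideal B) (hQ : Q.IsMaximal) :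
    ∃ φ : B →ₐ[ℂ] ℂ, ∀ b ∈ Q, φ b = 0 := by
  let _ : Field (B ⧸ Q) := Ideal.Quotient.field Q
  have : Algebra.FiniteType ℂ (B ⧸ Q) := inferInstance
  have : Module.Finite ℂ (B ⧸ Q) := finite_of_finite_type_of_isJacobsonRing ℂ (B ⧸ Q)
  have hb := IsAlgClosed.algebraMap_bijective_of_isIntegral (k := ℂ) (K := B ⧸ Q)
  let E := AlgEquiv.ofBijective (Algebra.ofId ℂ (B ⧸ Q)) hb
  refine ⟨E.symm.toAlgHom.comp (Ideal.Quotient.mkₐ ℂ Q), fun b hb => ?_⟩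
  have : Ideal.Quotient.mk Q b = 0 := Ideal.Quotient.eq_zero_iff_mem.2 hb
  simp [this]

section Upper
variable {B : Type*} [CommRing B] [IsDomain B] [Algebra ℂ B]

lemma upper_aux {e r : ℕ} [Algebra (MvPolynomial (Fin e) ℂ) B] [Module.Finite (MvPolynomial (Fin e) ℂ) B]
    (y : Fin r → B) (z : Fin e → B) (hzz : ∀ g, algebraMap (MvPolynomial (Fin e) ℂ) B g = aeval z g)
    (U : Submodule ℂ B) (hU : U.FG) (h : ∀ m, sp y ^ m ≤ sp z ^ m * U) (hinj : Function.Injective (algebraMap (MvPolynomial (Fin e) ℂ) B))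
    (θ : B) (hθ : ∀ b : B, ∃ h : MvPolynomial (Fin e) ℂ, h ≠ 0 ∧ ∃ G : Polynomial (MvPolynomial (Fin e) ℂ), h • b = Polynomial.aeval θ G) :
    ∃ c : ℕ, ∀ m, Module.finrank ℂ (sp y ^ m : Submodule ℂ B) ≤ (minpoly (MvPolynomial (Fin e) ℂ) θ).natDegree * (m + c + e).choose e := by
  obtain ⟨S, rfl⟩ := hU
  obtain ⟨η, hη0, hη⟩ := prim_fin θ hθ S
  have hint : IsIntegral (MvPolynomial (Fin e) ℂ) θ := Algebra.IsIntegral.isIntegral θ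
  have : FaithfulSMul (MvPolynomial (Fin e) ℂ) B := (faithfulSMul_iff_algebraMap_injective _ _).2 hinj
  set F := minpoly (MvPolynomial (Fin e) ℂ) θ with hF
  have hFm : F.Monic := minpoly.monic hint
  have hD : 0 < F.natDegree := minpoly.natDegree_pos hint
  have hη2 : ∀ u : B, ∃ G : Polynomial (MvPolynomial (Fin e) ℂ), u ∈ S → G.natDegree < F.natDegree ∧ η • u = Polynomial.aeval θ G := by
    intro u
    by_cases hu : u ∈ S
    · obtain ⟨G, hG⟩ := hη u hu
      refine ⟨G %ₘ F, fun _ => ⟨Polynomial.natDegree_modByMonic_lt _ hFm ?_, ?_⟩⟩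
      · intro h1; rw [h1] at hD; simp at hD
      · rw [hG, Polynomial.aeval_modByMonic_eq_self_of_root]
        exact minpoly.aeval _ _
    · exact ⟨0, fun h => absurd h hu⟩
  choose G hG using hη2
  let c := S.sup fun u => (Finset.range F.natDegree).sup fun k => ((G u).coeff k).totalDegree
  have hc : ∀ u ∈ S, ∀ k < F.natDegree, ((G u).coeff k).totalDegree ≤ c := by
    intro u hu k hk
    refine le_trans ?_ (Finset.le_sup (f := fun u => (Finset.range F.natDegree).sup fun k => ((G u).coeff k).totalDegree) hu)
    exact Finset.le_sup (f := fun k => ((G u).coeff k).totalDegree) (Finset.mem_range.2 hk)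
  refine ⟨c, fun m => ?_⟩
  let Ψ : (Fin F.natDegree → restrictTotalDegree (Fin e) ℂ (m + c)) →ₗ[ℂ] B :=
    ∑ k : Fin F.natDegree, (LinearMap.mulRight ℂ (θ ^ (k : ℕ))).comp ((aeval z).toLinearMap.comp
      ((restrictTotalDegree (Fin e) ℂ (m + c)).subtype.comp (LinearMap.proj k)))
  have hΨ : ∀ g, Ψ g = ∑ k : Fin F.natDegree, aeval z (g k : MvPolynomial (Fin e) ℂ) * θ ^ (k : ℕ) := by intro g; simp [Ψ]
  let T : B →ₗ[ℂ] B := LinearMap.mulLeft ℂ (aeval z η)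
  have hT : Function.Injective T := by
    intro a b hab
    refine mul_left_cancel₀ ?_ hab
    rw [← hzz]
    exact fun h0 => hη0 (hinj (by rw [h0, map_zero]))
  have hsub : (sp y ^ m).map T ≤ LinearMap.range Ψ := by
    rw [Submodule.map_le_iff_le_comap]
    refine (h m).trans ?_
    rw [Submodule.mul_le]
    intro w hw u hu
    rw [sp_pow_eq] at hw
    obtain ⟨g, hg, rfl⟩ := hw
    induction hu using Submodule.span_induction with
    | mem u hu =>
      rw [Submodule.mem_comap]
      refine ⟨fun k => ⟨g * (G u).coeff k, ?_⟩, ?_⟩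
      · rw [SetLike.mem_coe, mem_restrictTotalDegree] at hg
        rw [mem_restrictTotalDegree]
        refine (totalDegree_mul _ _).trans ?_
        have := hc u hu k k.2
        omega
      · rw [hΨ]
        have h1 := (hG u hu).2
        rw [Polynomial.aeval_eq_sum_range' (hG u hu).1, ← Fin.sum_univ_eq_sum_range (fun k => (G u).coeff k • θ ^ k)] at h1
        simp only [Algebra.smul_def, hzz] at h1
        simp only [T, LinearMap.mulLeft_apply, AlgHom.toLinearMap_apply, map_mul]
        rw [mul_left_comm, h1, Finset.mul_sum]
        simp only [mul_assoc]
    | zero => rw [mul_zero]; exact zero_mem _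
    | add u v _ _ hu hv => rw [mul_add]; exact add_mem hu hv
    | smul a u _ hu => rw [mul_smul_comm]; exact Submodule.smul_mem _ _ hu
  have e1 : Module.finrank ℂ ((sp y ^ m).map T) = Module.finrank ℂ (sp y ^ m : Submodule ℂ B) :=
    (Submodule.equivMapOfInjective T hT _).symm.finrank_eq
  rw [← e1]
  refine (Submodule.finrank_mono hsub).trans ((LinearMap.finrank_range_le Ψ).trans ?_)
  rw [Module.finrank_pi_fintype]
  simp only [rtd_finrank, Finset.sum_const, Finset.card_univ, Fintype.card_fin, smul_eq_mul]
  exact le_rfl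

lemma attain_aux {e : ℕ} [Algebra (MvPolynomial (Fin e) ℂ) B] [Module.Finite (MvPolynomial (Fin e) ℂ) B]
    (z : Fin e → B) (hzz : ∀ g, algebraMap (MvPolynomial (Fin e) ℂ) B g = aeval z g)
    (hinj : Function.Injective (algebraMap (MvPolynomial (Fin e) ℂ) B))
    (θ : B) (h' : MvPolynomial (Fin e) ℂ) (h0 : h' ≠ 0) (a b : Polynomial (MvPolynomial (Fin e) ℂ))
    (hab : a * minpoly (MvPolynomial (Fin e) ℂ) θ + b * Polynomial.derivative (minpoly (MvPolynomial (Fin e) ℂ) θ) = Polynomial.C h') :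
    ∃ y0 : Fin e → ℂ, ∃ φ : Fin (minpoly (MvPolynomial (Fin e) ℂ) θ).natDegree → (B →ₐ[ℂ] ℂ),
      Function.Injective φ ∧ ∀ k i, φ k (z i) = y0 i := by
  have hint : IsIntegral (MvPolynomial (Fin e) ℂ) θ := Algebra.IsIntegral.isIntegral θ
  have : FaithfulSMul (MvPolynomial (Fin e) ℂ) B := (faithfulSMul_iff_algebraMap_injective _ _).2 hinj
  set F := minpoly (MvPolynomial (Fin e) ℂ) θ with hF
  have hFm : F.Monic := minpoly.monic hint
  obtain ⟨y0, hy0⟩ : ∃ y0, eval y0 h' ≠ 0 := by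
    by_contra hcon
    push Not at hcon
    exact h0 (MvPolynomial.funext fun x => by simpa using hcon x)
  set Fy := F.map (eval y0) with hFy
  have hsep : Fy.Separable := by
    have h1 := congrArg (Polynomial.map (eval y0)) hab
    simp only [Polynomial.map_add, Polynomial.map_mul, Polynomial.map_C, ← Polynomial.derivative_map] at h1
    refine ⟨Polynomial.C (eval y0 h')⁻¹ * a.map (eval y0), Polynomial.C (eval y0 h')⁻¹ * b.map (eval y0), ?_⟩
    rw [mul_assoc, mul_assoc, ← mul_add, h1, ← Polynomial.C_mul, inv_mul_cancel₀ hy0, Polynomial.C_1]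
  have hcard : Fy.roots.toFinset.card = F.natDegree := by
    rw [Multiset.toFinset_card_of_nodup (Polynomial.nodup_roots hsep), 
      ← (IsAlgClosed.splits Fy).natDegree_eq_card_roots, hFm.natDegree_map]
  have i1 : IsScalarTower ℂ (MvPolynomial (Fin e) ℂ) B := by
    refine IsScalarTower.of_algebraMap_eq fun x => ?_
    rw [hzz, AlgHom.commutes]
  have i2 : Algebra.FiniteType ℂ B := Algebra.FiniteType.trans (S := MvPolynomial (Fin e) ℂ) inferInstance inferInstance
  have key : ∀ τ ∈ Fy.roots.toFinset, ∃ φ : B →ₐ[ℂ] ℂ, φ θ = τ ∧ ∀ i, φ (z i) = y0 i := by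
    intro τ hτ
    rw [Multiset.mem_toFinset] at hτ
    have hτ' := (Polynomial.mem_roots'.1 hτ).2
    let ψ : Polynomial (MvPolynomial (Fin e) ℂ) →+* ℂ := Polynomial.eval₂RingHom (eval y0) τ
    have hψ : Function.Surjective ψ := fun c => ⟨Polynomial.C (C c), by simp [ψ]⟩
    let α : Polynomial (MvPolynomial (Fin e) ℂ) →+* B := (Polynomial.aeval θ).toRingHom
    have hker : RingHom.ker α ≤ RingHom.ker ψ := by
      intro g hg
      have h1 : F ∣ g := minpoly.isIntegrallyClosed_dvd hint hg
      have h2 : ψ F = 0 := by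
        change Polynomial.eval₂ (eval y0) τ F = 0
        rw [← Polynomial.eval_map]; exact hτ'
      obtain ⟨q, rfl⟩ := h1
      rw [RingHom.mem_ker, map_mul, h2, zero_mul]
    have hm : (RingHom.ker ψ).IsMaximal := RingHom.ker_isMaximal_of_surjective ψ hψ
    let _ : Algebra (Polynomial (MvPolynomial (Fin e) ℂ)) B := α.toAlgebra
    have : Algebra.IsIntegral (Polynomial (MvPolynomial (Fin e) ℂ)) B := by
      have : IsScalarTower (MvPolynomial (Fin e) ℂ) (Polynomial (MvPolynomial (Fin e) ℂ)) B := by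
        refine IsScalarTower.of_algebraMap_eq fun x => ?_
        change _ = Polynomial.aeval θ (Polynomial.C x)
        simp
      exact Algebra.IsIntegral.tower_top (R := MvPolynomial (Fin e) ℂ)
    obtain ⟨Q, hQ, hQ2⟩ := Ideal.exists_ideal_over_maximal_of_isIntegral (S := B) (RingHom.ker ψ) hker
    obtain ⟨φ, hφ⟩ := max_hom Q hQ
    have hφ2 : ∀ g, ψ g = 0 → φ (Polynomial.aeval θ g) = 0 := by
      intro g hg
      apply hφ
      have : g ∈ Q.comap (algebraMap (Polynomial (MvPolynomial (Fin e) ℂ)) B) := by rw [hQ2]; exact hg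
      exact this
    refine ⟨φ, ?_, fun i => ?_⟩
    · have := hφ2 (Polynomial.X - Polynomial.C (C τ)) (by simp [ψ])
      simp only [map_sub, Polynomial.aeval_X, Polynomial.aeval_C, hzz, aeval_C, AlgHom.commutes] at this
      simpa [sub_eq_zero] using this
    · have := hφ2 (Polynomial.C (X i - C (y0 i))) (by simp [ψ])
      simp only [map_sub, Polynomial.aeval_C, hzz, aeval_C, aeval_X, AlgHom.commutes] at this
      simpa [sub_eq_zero] using this
  let E := (Finset.equivFinOfCardEq hcard).symm
  choose φ hφ1 hφ2 using key
  refine ⟨y0, fun k => φ (E k).1 (E k).2, fun k l hkl => ?_, fun k i => hφ2 _ (E k).2 i⟩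
  have h1 : φ (E k).1 (E k).2 θ = φ (E l).1 (E l).2 θ := congrArg (fun f : B →ₐ[ℂ] ℂ => f θ) hkl
  rw [hφ1 _ (E k).2, hφ1 _ (E l).2] at h1
  exact E.injective (Subtype.ext h1)

lemma nn_deg {e r : ℕ} (y : Fin r → B) (z : Fin e → B) (hz : AlgebraicIndependent ℂ z)
    (hf : (aeval (R := ℂ) z).toRingHom.Finite) (U : Submodule ℂ B) (hU : U.FG)
    (h : ∀ m, sp y ^ m ≤ sp z ^ m * U) :
    ∃ D c : ℕ, 0 < D ∧ (∀ m, Module.finrank ℂ (sp y ^ m : Submodule ℂ B) ≤ D * (m + c + e).choose e) ∧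
    ∃ y0 : Fin e → ℂ, ∃ φ : Fin D → (B →ₐ[ℂ] ℂ), Function.Injective φ ∧ ∀ k i, φ k (z i) = y0 i := by
  let _ : Algebra (MvPolynomial (Fin e) ℂ) B := (aeval (R := ℂ) z).toRingHom.toAlgebra
  have : Module.Finite (MvPolynomial (Fin e) ℂ) B := hf
  have hzz : ∀ g, algebraMap (MvPolynomial (Fin e) ℂ) B g = aeval z g := fun g => rfl
  have hinj : Function.Injective (algebraMap (MvPolynomial (Fin e) ℂ) B) := hz
  have : FaithfulSMul (MvPolynomial (Fin e) ℂ) B := (faithfulSMul_iff_algebraMap_injective _ _).2 hinj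
  obtain ⟨θ, hθ, h', h0, a, b, hab⟩ := prim_elt (A := MvPolynomial (Fin e) ℂ) (B := B)
  obtain ⟨c, hc⟩ := upper_aux y z hzz U hU h hinj θ hθ
  exact ⟨_, c, minpoly.natDegree_pos (Algebra.IsIntegral.isIntegral θ), hc,
    attain_aux z hzz hinj θ h' h0 a b hab⟩

end Upper

end Part7

section Part8


lemma choose_lim (N M K d : ℕ) (h : ∀ m, N * (m + d).choose d ≤ M * (m + K + d).choose d) : N ≤ M := by
  have h1 : ∀ m : ℕ, N * (m + 1) ^ d ≤ M * (m + K + d) ^ d := by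
    intro m
    have a1 : (m + 1) ^ d ≤ d.factorial * (m + d).choose d := by
      rw [← Nat.descFactorial_eq_factorial_mul_choose]
      have := Nat.pow_sub_le_descFactorial (m + d) d
      rwa [show m + d + 1 - d = m + 1 by omega] at this
    have a2 : d.factorial * (m + K + d).choose d ≤ (m + K + d) ^ d := by
      rw [← Nat.descFactorial_eq_factorial_mul_choose]
      exact Nat.descFactorial_le_pow _ _
    calc N * (m+1)^d ≤ N * (d.factorial * (m + d).choose d) := Nat.mul_le_mul_left _ a1
      _ = d.factorial * (N * (m + d).choose d) := by ring
      _ ≤ d.factorial * (M * (m + K + d).choose d) := Nat.mul_le_mul_left _ (h m)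
      _ = M * (d.factorial * (m + K + d).choose d) := by ring
      _ ≤ _ := Nat.mul_le_mul_left _ a2
  have h2 : ∀ m : ℕ, (N : ℝ) ≤ M * (1 + ((K : ℝ) + d - 1) * (1 / ((m : ℝ) + 1))) ^ d := by
    intro m
    have hm : (0 : ℝ) < (m : ℝ) + 1 := by positivity
    have e1 : 1 + ((K : ℝ) + d - 1) * (1 / ((m : ℝ) + 1)) = (m + K + d) / (m + 1) := by
      field_simp; ring
    rw [e1, div_pow, ← mul_div_assoc, le_div_iff₀ (by positivity)]
    exact_mod_cast h1 m
  have h3 : Filter.Tendsto (fun m : ℕ => (M : ℝ) * (1 + ((K : ℝ) + d - 1) * (1 / ((m : ℝ) + 1))) ^ d) Filter.atTop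
      (nhds ((M : ℝ) * (1 + ((K : ℝ) + d - 1) * 0) ^ d)) :=
    ((((tendsto_one_div_add_atTop_nhds_zero_nat).const_mul _).const_add _).pow d).const_mul _
  have h4 := ge_of_tendsto' h3 h2
  simp only [mul_zero, add_zero, one_pow, mul_one] at h4
  exact_mod_cast h4

section Fib
variable {B : Type*} [CommRing B] [Algebra ℂ B]

lemma fib_finite {e : ℕ} (z : Fin e → B) (hf : (aeval (R := ℂ) z).toRingHom.Finite) (y0 : Fin e → ℂ) (b : B) :
    {t : ℂ | ∃ φ : B →ₐ[ℂ] ℂ, (∀ i, φ (z i) = y0 i) ∧ φ b = t}.Finite := by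
  obtain ⟨p, hp, hpb⟩ := hf.to_isIntegral b
  have h1 : (p.map (eval y0)).Monic := hp.map _
  refine ((p.map (eval y0)).roots.toFinset.finite_toSet).subset ?_
  rintro t ⟨φ, hφ, rfl⟩
  rw [Finset.mem_coe, Multiset.mem_toFinset, Polynomial.mem_roots h1.ne_zero, Polynomial.IsRoot.def, Polynomial.eval_map]
  have h2 := congrArg φ.toRingHom hpb
  rw [Polynomial.hom_eval₂, map_zero] at h2
  rw [← h2]
  congr 1
  ext i
  · simp
  · simp [hφ]

end Fib

variable {n : ℕ}

lemma deg_attain {V : Set (Fin n → ℂ)} (hV : IsIrredVariety n V) :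
    ∃ D c : ℕ, 0 < D ∧ (∀ m, hb (vanishingIdeal n V) m ≤ D * (m + c + dim n V).choose (dim n V)) ∧
      ∃ L : AffineSubspace ℂ (Fin n → ℂ),
        Module.finrank ℂ L.direction = n - dim n V ∧ (V ∩ ↑L).Finite ∧ D ≤ (V ∩ ↑L).ncard := by
  have hP := irr_prime hV
  set P := vanishingIdeal n V with hPdef
  obtain ⟨e, z, hz1, hz2, hz3, U, hU, hU2⟩ := nn_pkg P
  have he : dim n V = e := by
    rw [dim_eq hV]; apply natcast_inj; rw [← pd_spec, dim_of_nn z hz2 hz3]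
  obtain ⟨D, c, hD, hup, y0, φ, hφ1, hφ2⟩ := nn_deg (cf P) z hz2 hz3 U hU hU2
  rw [he]
  have hz4 : ∀ i, ∃ a : Fin n → ℂ, ∑ j, a j • cf P j = z i := fun i =>
    (Submodule.mem_span_range_iff_exists_fun ℂ).1 (hz1 i)
  choose a ha using hz4
  let M : Matrix (Fin e) (Fin n) ℂ := Matrix.of a
  have hli : LinearIndependent ℂ M.row := by
    have h1 : LinearIndependent ℂ z := hz2.linearIndependent
    rw [Fintype.linearIndependent_iff] at h1 ⊢
    intro g hg
    apply h1 g
    have h2 : ∀ j, ∑ i, g i * a i j = 0 := by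
      intro j
      have := congrFun hg j
      simpa [M, Matrix.row] using this
    calc ∑ i, g i • z i = ∑ i, ∑ j, (g i * a i j) • cf P j := by
          refine Finset.sum_congr rfl fun i _ => ?_
          rw [← ha i, Finset.smul_sum]
          simp only [smul_smul]
      _ = ∑ j, (∑ i, g i * a i j) • cf P j := by
          rw [Finset.sum_comm]
          simp only [Finset.sum_smul]
      _ = 0 := by simp [h2]
  have hrank : M.rank = e := by simpa using hli.rank_matrix
  have hker : Module.finrank ℂ (LinearMap.ker M.mulVecLin) = n - e := by
    have := LinearMap.finrank_range_add_finrank_ker M.mulVecLin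
    rw [Module.finrank_fin_fun] at this
    change M.rank + _ = n at this
    omega
  let x : Fin D → Fin n → ℂ := fun k j => φ k (cf P j)
  have hMx : ∀ (ψ : (MvPolynomial (Fin n) ℂ ⧸ P) →ₐ[ℂ] ℂ), M.mulVecLin (fun j => ψ (cf P j)) = fun i => ψ (z i) := by
    intro ψ
    ext i
    rw [← ha i, map_sum]
    simp only [map_smul, Matrix.mulVecLin_apply, Matrix.mulVec, dotProduct, M, Matrix.of_apply, smul_eq_mul]
  have hxV : ∀ k, x k ∈ V := by
    intro k
    rw [← zl_vi hV.1]
    intro f hf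
    have h1 : Ideal.Quotient.mkₐ ℂ P f = 0 := Ideal.Quotient.eq_zero_iff_mem.2 hf
    rw [← aeval_cf] at h1
    have h2 := congrArg (φ k) h1
    rw [map_zero, ← AlgHom.comp_apply, comp_aeval] at h2
    rw [← h2, ← coe_aeval_eq_eval]
    rfl
  let x0 := x ⟨0, hD⟩
  let L : AffineSubspace ℂ (Fin n → ℂ) := AffineSubspace.mk' x0 (LinearMap.ker M.mulVecLin)
  have hmemL : ∀ w, w ∈ L ↔ M.mulVecLin w = y0 := by
    intro w
    rw [AffineSubspace.mem_mk', LinearMap.mem_ker, vsub_eq_sub, map_sub, sub_eq_zero, hMx]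
    simp only [hφ2]
  have hfin : (V ∩ ↑L).Finite := by
    refine (Set.Finite.pi' (fun j => fib_finite z hz3 y0 (cf P j))).subset ?_
    rintro w ⟨hw1, hw2⟩
    let ψ : (MvPolynomial (Fin n) ℂ ⧸ P) →ₐ[ℂ] ℂ := Ideal.Quotient.liftₐ P (aeval w) (by
      intro f hf
      have := hf w hw1
      rwa [← coe_aeval_eq_eval] at this)
    have hψ : ∀ j, ψ (cf P j) = w j := by
      intro j
      change aeval w (X j) = w j
      simp
    intro j
    refine ⟨ψ, fun i => ?_, hψ j⟩
    have h1 := hMx ψ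
    simp only [hψ] at h1
    rw [(hmemL w).1 hw2] at h1
    exact (congrFun h1 i).symm
  refine ⟨D, c, hD, fun m => ?_, L, ?_, hfin, ?_⟩
  · have := hup m
    rw [sp_pow_eq, aeval_cf] at this
    exact this
  · rw [AffineSubspace.direction_mk', hker]
  · have hxinj : Function.Injective x := by
      intro k l hkl
      apply hφ1
      apply Ideal.Quotient.algHom_ext
      apply MvPolynomial.algHom_ext
      intro j
      exact congrFun hkl j
    have h1 : Set.range x ⊆ V ∩ ↑L := by
      rintro _ ⟨k, rfl⟩
      refine ⟨hxV k, (hmemL _).2 ?_⟩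
      rw [hMx]
      simp only [hφ2]
    have h2 := Set.ncard_le_ncard h1 hfin
    rwa [← Set.image_univ, Set.ncard_image_of_injective _ hxinj, Set.ncard_univ, Nat.card_fin] at h2

lemma deg_pkg {V : Set (Fin n → ℂ)} (hV : IsIrredVariety n V) :
    0 < degree n V ∧ 
    (∃ c, ∀ m, hb (vanishingIdeal n V) m ≤ degree n V * (m + c + dim n V).choose (dim n V)) ∧
    ∃ K, ∀ m, degree n V * (m + dim n V).choose (dim n V) ≤ hb (vanishingIdeal n V) (m + K) := by
  obtain ⟨D, c, hD, hup, L, hL1, hL2, hL3⟩ := deg_attain hV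
  have hbd : ∀ L' : AffineSubspace ℂ (Fin n → ℂ),
      Module.finrank ℂ L'.direction = n - dim n V → (V ∩ ↑L').Finite → (V ∩ ↑L').ncard ≤ D := by
    intro L' h1 h2
    obtain ⟨K, hK⟩ := lower hV L' h1 h2
    apply choose_lim _ _ (K + c) (dim n V)
    intro m
    refine (hK m).trans ((hup _).trans ?_)
    rw [add_assoc m K c]
  have hdeg : degree n V = D := by
    unfold degree
    apply le_antisymm
    · refine csSup_le (Set.nonempty_of_mem (x := (V ∩ ↑L).ncard) ⟨L, hL1, hL2, rfl⟩) ?_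
      rintro _ ⟨L', h1, h2, rfl⟩
      exact hbd L' h1 h2
    · refine hL3.trans (le_csSup ⟨D, ?_⟩ ⟨L, hL1, hL2, rfl⟩)
      rintro _ ⟨L', h1, h2, rfl⟩
      exact hbd L' h1 h2
  rw [hdeg]
  refine ⟨hD, ⟨c, hup⟩, ?_⟩
  obtain ⟨K, hK⟩ := lower hV L hL1 hL2
  exact ⟨K, fun m => (Nat.mul_le_mul_right _ hL3).trans (hK m)⟩

end Part8

section Part9


section Main
variable {n : ℕ}

lemma pd_le_n (P : Ideal (MvPolynomial (Fin n) ℂ)) [P.IsPrime] : pd P ≤ n := by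
  have h := pd_le (⊥ : Ideal (MvPolynomial (Fin n) ℂ)) P bot_le
  rwa [pd_bot] at h

lemma mcd_exists (J P : Ideal (MvPolynomial (Fin n) ℂ)) [hP : P.IsPrime] (h : J ≤ P) :
    ∃ e, mcd J P e ∧ pd P ≤ e ∧ e ≤ n := by
  let S : Set ℕ := {e | ∃ Q ∈ J.minimalPrimes, Q ≤ P ∧ pd Q = e}
  have hbdd : BddAbove S := by
    refine ⟨n, ?_⟩
    rintro e ⟨Q, hQ, -, rfl⟩
    have : Q.IsPrime := hQ.1.1
    exact pd_le_n Q
  obtain ⟨Q, hQ, hQP⟩ := Ideal.exists_minimalPrimes_le h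
  have hQp : Q.IsPrime := hQ.1.1
  have hne : S.Nonempty := ⟨pd Q, Q, hQ, hQP, rfl⟩
  refine ⟨sSup S, ⟨Nat.sSup_mem hne hbdd, fun Q hQ hle => le_csSup hbdd ⟨Q, hQ, hle, rfl⟩⟩, ?_, ?_⟩
  · exact (pd_le Q P hQP).trans (le_csSup hbdd ⟨Q, hQ, hQP, rfl⟩)
  · obtain ⟨Q', hQ', -, h2⟩ := Nat.sSup_mem hne hbdd
    have : Q'.IsPrime := hQ'.1.1
    rw [← h2]; exact pd_le_n Q'

lemma mcd_unique {J P : Ideal (MvPolynomial (Fin n) ℂ)} {e e' : ℕ} (h : mcd J P e) (h' : mcd J P e') : e = e' := by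
  obtain ⟨⟨Q, h1, h2, h3⟩, h4⟩ := h
  obtain ⟨⟨Q', h1', h2', h3'⟩, h4'⟩ := h'
  have a := h4 Q' h1' h2'
  have b := h4' Q h1 h2
  omega

lemma mcd_bound {J P Q : Ideal (MvPolynomial (Fin n) ℂ)} [hQ : Q.IsPrime] {e : ℕ} (h : mcd J P e) (hJ : J ≤ Q) (hQP : Q ≤ P) :
    pd Q ≤ e := by
  obtain ⟨Q2, hQ2, h2⟩ := Ideal.exists_minimalPrimes_le hJ
  have : Q2.IsPrime := hQ2.1.1
  exact (pd_le Q2 Q h2).trans (h.2 Q2 hQ2 (h2.trans hQP))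

lemma mcd_step {J P : Ideal (MvPolynomial (Fin n) ℂ)} [hP : P.IsPrime] {e e' : ℕ} {f : MvPolynomial (Fin n) ℂ} (hf : f ∈ P)
    (h : mcd J P e) (h' : mcd (J ⊔ Ideal.span {f}) P e') : e ≤ e' + 1 := by
  obtain ⟨⟨Q, h1, h2, h3⟩, h4⟩ := h
  have : Q.IsPrime := h1.1.1
  have hle : Q ⊔ Ideal.span {f} ≤ P := sup_le h2 (by rwa [Ideal.span_singleton_le_iff_mem])
  obtain ⟨Q1, hQ1, hQ1P⟩ := Ideal.exists_minimalPrimes_le hle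
  have hp1 : Q1.IsPrime := hQ1.1.1
  have := E2 Q f Q1 hQ1
  have h5 := mcd_bound h' ((sup_le_sup_right h1.1.2 _).trans hQ1.1.2) hQ1P
  omega

lemma mcd_bot (P : Ideal (MvPolynomial (Fin n) ℂ)) : mcd ⊥ P n := by
  have hm : (⊥ : Ideal (MvPolynomial (Fin n) ℂ)) ∈ (⊥ : Ideal (MvPolynomial (Fin n) ℂ)).minimalPrimes := by
    rw [Ideal.minimalPrimes_eq_subsingleton_self]; rfl
  refine ⟨⟨⊥, hm, bot_le, pd_bot⟩, fun Q hQ _ => ?_⟩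
  have : Q.IsPrime := hQ.1.1
  exact pd_le_n Q

lemma mcd_attain (P : Ideal (MvPolynomial (Fin n) ℂ)) [hP : P.IsPrime] (T : Finset (MvPolynomial (Fin n) ℂ)) :
    (↑T ⊆ (P : Set (MvPolynomial (Fin n) ℂ))) → ∀ e0, mcd (Ideal.span ↑T) P e0 → ∀ e, e0 ≤ e → e ≤ n →
      ∃ T' ⊆ T, mcd (Ideal.span ↑T') P e := by
  classical
  induction T using Finset.induction_on with
  | empty =>
    intro _ e0 h e h1 h2
    have : e0 = n := by
      refine mcd_unique h ?_
      simpa using mcd_bot P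
    refine ⟨∅, subset_rfl, ?_⟩
    rwa [show e = e0 by omega]
  | insert f T _ ih =>
    intro hTP e0 h e h1 h2
    have hTP' : ↑T ⊆ (P : Set (MvPolynomial (Fin n) ℂ)) := fun x hx => hTP (by simp [show x ∈ T from hx])
    obtain ⟨e1, he1, -, -⟩ := mcd_exists (Ideal.span ↑T) P (Ideal.span_le.2 hTP')
    have hst : e1 ≤ e0 + 1 := by
      refine mcd_step (f := f) (hTP (by simp)) he1 ?_
      rwa [← Ideal.span_union, Set.union_singleton, ← Finset.coe_insert]
    by_cases hee : e1 ≤ e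
    · obtain ⟨T', hT', h3⟩ := ih hTP' e1 he1 e hee h2
      exact ⟨T', hT'.trans (Finset.subset_insert _ _), h3⟩
    · refine ⟨insert f T, subset_rfl, ?_⟩
      rwa [show e = e0 by omega]

lemma pdeg_le (V : Set (Fin n → ℂ)) (i : ℕ) (hi : i ≠ 0) (I : Finset (MvPolynomial (Fin n) ℂ)) (δ : ℕ)
    (h1 : ∀ f ∈ I, f.totalDegree ≤ δ) (h2 : ↑I ⊆ (vanishingIdeal n V : Set (MvPolynomial (Fin n) ℂ)))
    (h3 : mcd (Ideal.span ↑I) (vanishingIdeal n V) (n - i)) : partialDeg n V i ≤ δ := by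
  rw [partialDeg, if_neg hi]
  exact Nat.sInf_le ⟨I, h1, sub_zl.2 h2, (mcd_iff _).2 h3⟩

lemma pdeg_mem {V : Set (Fin n → ℂ)} (hV : IsIrredVariety n V) (i : ℕ) (hi : i ≠ 0) (hin : i ≤ n - dim n V) :
    ∃ I : Finset (MvPolynomial (Fin n) ℂ), (∀ f ∈ I, f.totalDegree ≤ partialDeg n V i) ∧
      ↑I ⊆ (vanishingIdeal n V : Set (MvPolynomial (Fin n) ℂ)) ∧
      mcd (Ideal.span ↑I) (vanishingIdeal n V) (n - i) := by
  have hP := irr_prime hV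
  set S := { δ | ∃ I : Finset (MvPolynomial (Fin n) ℂ),
    (∀ f ∈ I, f.totalDegree ≤ δ) ∧ V ⊆ zeroLocus n ↑I ∧
      MaxCompDimEq n (zeroLocus n ↑I) V (n - i) } with hS
  have hne : S.Nonempty := by
    obtain ⟨T, hT⟩ := (isNoetherianRing_iff_ideal_fg _).1 inferInstance (vanishingIdeal n V)
    have hTP : ↑T ⊆ (vanishingIdeal n V : Set (MvPolynomial (Fin n) ℂ)) := by
      rw [← hT]; exact Ideal.subset_span
    have h0 : mcd (Ideal.span ↑T) (vanishingIdeal n V) (dim n V) := by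
      have hT' : Ideal.span ↑T = vanishingIdeal n V := hT
      rw [hT', dim_eq hV]
      have hm : vanishingIdeal n V ∈ (vanishingIdeal n V).minimalPrimes := by
        rw [Ideal.minimalPrimes_eq_subsingleton_self]; rfl
      refine ⟨⟨_, hm, le_rfl, rfl⟩, fun Q hQ hQ2 => ?_⟩
      rw [Ideal.minimalPrimes_eq_subsingleton_self] at hQ
      rw [hQ]
    obtain ⟨T', hT', h1⟩ := mcd_attain _ T hTP _ h0 (n - i) (by omega) (by omega)
    refine ⟨T'.sup totalDegree, T', fun f hf => Finset.le_sup hf, sub_zl.2 ?_, (mcd_iff _).2 h1⟩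
    exact fun x hx => hTP (hT' hx)
  obtain ⟨I, h1, h2, h3⟩ := Nat.sInf_mem hne
  refine ⟨I, ?_, sub_zl.1 h2, (mcd_iff _).1 h3⟩
  rw [partialDeg, if_neg hi]
  exact h1

lemma chain_bd {V : Set (Fin n → ℂ)} (hV : IsIrredVariety n V) (t : ℕ) : ∀ j, j + t = n - dim n V →
    ∀ Q : Ideal (MvPolynomial (Fin n) ℂ), Q.IsPrime → Q ≤ vanishingIdeal n V → pd Q = n - j →
    ∃ K, ∀ m, degree n V * (m + (n - j)).choose (n - j) ≤
      (∏ i ∈ Finset.Icc (j + 1) (n - dim n V), partialDeg n V i) * hb Q (m + K) := by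
  have hP := irr_prime hV
  have hdn : dim n V ≤ n := by rw [dim_eq hV]; exact pd_le_n _
  induction t with
  | zero =>
    intro j hj Q hQ hQP hpd
    have hj' : n - j = dim n V := by omega
    have : Q = vanishingIdeal n V := by
      apply pd_eq _ _ hQP
      rw [hpd, ← dim_eq hV]; omega
    subst this
    obtain ⟨-, -, K, hK⟩ := deg_pkg hV
    refine ⟨K, fun m => ?_⟩
    rw [Finset.Icc_eq_empty (by omega), Finset.prod_empty, one_mul, hj']
    exact hK m
  | succ t ih =>
    intro j hj Q hQ hQP hpd
    obtain ⟨I, hI1, hI2, hI3⟩ := pdeg_mem hV (j + 1) (by omega) (by omega)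
    obtain ⟨f, hfI, hfQ⟩ : ∃ f ∈ I, f ∉ Q := by
      by_contra hcon
      push Not at hcon
      have := mcd_bound hI3 (Ideal.span_le.2 hcon) hQP
      omega
    have hfP : f ∈ vanishingIdeal n V := hI2 hfI
    obtain ⟨Q1, hQ1, hQ1P⟩ := Ideal.exists_minimalPrimes_le
      (sup_le hQP ((Ideal.span_singleton_le_iff_mem _).2 hfP))
    have hQ1p : Q1.IsPrime := hQ1.1.1
    have hpd1 := E1 Q f hfQ Q1 hQ1
    obtain ⟨K, hK⟩ := ih (j + 1) (by omega) Q1 hQ1p hQ1P (by omega)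
    have hδ : 1 ≤ partialDeg n V (j + 1) := by
      refine le_trans ?_ (hI1 f hfI)
      by_contra hcon
      have h0 : f.totalDegree = 0 := by omega
      rw [totalDegree_eq_zero_iff_eq_C] at h0
      have hc : coeff 0 f ≠ 0 := by
        intro hc
        rw [hc, C_0] at h0
        exact hfQ (by rw [h0]; exact zero_mem _)
      apply hP.ne_top
      rw [h0] at hfP
      exact Ideal.eq_top_of_isUnit_mem _ hfP ((isUnit_iff_ne_zero.2 hc).map C)
    refine ⟨K, fun m => ?_⟩
    have := bez_choose (le_sup_left.trans hQ1.1.2) f hfQ (hQ1.1.2 (Ideal.mem_sup_right (Ideal.mem_span_singleton_self f)))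
      (partialDeg n V (j + 1)) (hI1 f hfI) hδ _ _ K _ hK m
    rw [show n - (j + 1) + 1 = n - j by omega] at this
    refine this.trans_eq ?_
    congr 1
    have h9 := Finset.mul_prod_Ioc_eq_prod_Icc (f := fun i => partialDeg n V i)
      (show j + 1 ≤ n - dim n V by omega)
    have h10 : Finset.Icc (j + 1 + 1) (n - dim n V) = Finset.Ioc (j + 1) (n - dim n V) := by
      ext i; simp only [Finset.mem_Icc, Finset.mem_Ioc]; omega
    rw [← h9, h10, mul_comm]

lemma self_comp {X W : Set (Fin n → ℂ)} (hX : IsIrredVariety n X) : IsIrredComponent n W X ↔ W = X := by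
  constructor
  · rintro ⟨h1, h2, h3⟩
    exact (h3 X hX h2 subset_rfl).symm
  · rintro rfl
    exact ⟨hX, subset_rfl, fun W' _ h1 h2 => subset_antisymm h2 h1⟩

lemma degreeSum_irr {X : Set (Fin n → ℂ)} (hX : IsIrredVariety n X) : degreeSum n X = degree n X := by
  have : {W | IsIrredComponent n W X} = {X} := by
    ext W; simp [self_comp hX]
  rw [degreeSum, this, finsum_mem_singleton]

end Main

end Part9

/-- Lemma 3.5 of the paper: a lower bound for the affine Hilbert function of
an irreducible variety `V` at `m`, when `2 s δ_s(V) ≤ m < δ_{s+1}(V)` and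
`c₀ m^{n-s} Δ_s(V) > k`. -/
theorem statement10 (n : ℕ) (c0 : ℝ) (hc0 : 0 < c0) (hCP : ChardinPhilippon n c0)
    (V : Set (Fin n → ℂ)) (d : ℕ) (hV : IsIrredVariety n V) (hd : dim n V = d)
    (s : ℕ) (hs : s ≤ n - d) (k m : ℕ) (hk : 0 < k) (hm : 0 < m)
    (hm1 : 2 * s * partialDeg n V s ≤ m)
    (hm2 : (m : ℕ∞) < partialDegE n V (s + 1))
    (hkm : (k : ℝ) < c0 * (m : ℝ) ^ (n - s) * Delta n V s) :
    k < hilbert n V m := by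
  have hP := irr_prime hV
  have hdn : dim n V ≤ n := by rw [dim_eq hV]; exact pd_le_n _
  set P := vanishingIdeal n V with hPdef
  -- the polynomials of degree at most m vanishing on V
  obtain ⟨T, hT⟩ : (P.restrictScalars ℂ ⊓ restrictTotalDegree (Fin n) ℂ m).FG := by
    rw [Submodule.fg_iff_finiteDimensional]
    exact Submodule.finiteDimensional_of_le (inf_le_right)
  have hTmem : ∀ f ∈ T, f ∈ P ∧ f.totalDegree ≤ m := by
    intro f hf
    have : f ∈ P.restrictScalars ℂ ⊓ restrictTotalDegree (Fin n) ℂ m := by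
      rw [← hT]; exact Submodule.subset_span hf
    exact ⟨this.1, (mem_restrictTotalDegree _ _ _).1 this.2⟩
  have hTspan : ∀ f ∈ P, f.totalDegree ≤ m → f ∈ Ideal.span (T : Set (MvPolynomial (Fin n) ℂ)) := by
    intro f hf hfm
    have : f ∈ Submodule.span ℂ (T : Set (MvPolynomial (Fin n) ℂ)) := by
      rw [hT]; exact ⟨hf, (mem_restrictTotalDegree _ _ _).2 hfm⟩
    exact Submodule.span_le_restrictScalars ℂ (MvPolynomial (Fin n) ℂ) _ this
  have hTP : ↑T ⊆ (P : Set (MvPolynomial (Fin n) ℂ)) := fun f hf => (hTmem f hf).1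
  obtain ⟨e0, he0, he1, he2⟩ := mcd_exists (Ideal.span ↑T) P (Ideal.span_le.2 hTP)
  have hpdP : pd P = d := by rw [← hd, dim_eq hV]
  have hlow : n - s ≤ e0 := by
    by_contra hcon
    push Not at hcon
    obtain ⟨T', hT', h1⟩ := mcd_attain P T hTP e0 he0 (n - (s + 1)) (by omega) (by omega)
    have h2 := pdeg_le V (s + 1) (by omega) T' m (fun f hf => (hTmem f (hT' hf)).2) (fun f hf => hTP (hT' hf)) h1
    rw [partialDegE, if_pos (by omega)] at hm2
    have : m < partialDeg n V (s + 1) := by exact_mod_cast hm2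
    omega
  have hδs : s ≠ 0 → partialDeg n V s ≤ m := by
    intro h0
    refine le_trans ?_ hm1
    exact Nat.le_mul_of_pos_left _ (by omega)
  have hupp : e0 ≤ n - s := by
    by_cases h0 : s = 0
    · omega
    · obtain ⟨I, hI1, hI2, hI3⟩ := pdeg_mem hV s h0 (by omega)
      obtain ⟨⟨Q, hQ, hQP, hQe⟩, -⟩ := he0
      have : Q.IsPrime := hQ.1.1
      rw [← hQe]
      refine mcd_bound hI3 (le_trans (Ideal.span_le.2 fun f hf => ?_) hQ.1.2) hQP
      exact hTspan f (hI2 hf) ((hI1 f hf).trans (hδs h0))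
  have he : e0 = n - s := le_antisymm hupp hlow
  obtain ⟨⟨Q, hQ, hQP, hQe⟩, -⟩ := he0
  have hQp : Q.IsPrime := hQ.1.1
  rw [he] at hQe
  set V' := zeroLocus n (Q : Set (MvPolynomial (Fin n) ℂ)) with hV'def
  have hV' : IsIrredVariety n V' := irr_zl Q
  have hviV' : vanishingIdeal n V' = Q := vi_zl Q
  have hdimV' : dim n V' = n - s := by rw [dim_eq hV', hviV', hQe]
  have hdel : s ≠ 0 → deltaSet n V' ≤ partialDeg n V s := by
    intro h0
    obtain ⟨I, hI1, hI2, hI3⟩ := pdeg_mem hV s h0 (by omega)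
    have hIQ : Ideal.span ↑I ≤ Q := le_trans (Ideal.span_le.2 fun f hf =>
      hTspan f (hI2 hf) ((hI1 f hf).trans (hδs h0))) hQ.1.2
    obtain ⟨Q2, hQ2, hQ2Q⟩ := Ideal.exists_minimalPrimes_le hIQ
    have hQ2p : Q2.IsPrime := hQ2.1.1
    have h1 := hI3.2 Q2 hQ2 (hQ2Q.trans hQP)
    have h2 : Q2 = Q := pd_eq Q2 Q hQ2Q (by omega)
    rw [h2] at hQ2
    refine Nat.sInf_le ⟨I, hI1, fun W hW => ?_⟩
    rw [(self_comp hV').1 hW]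
    exact comp_of_min hQ2
  have hcp := hCP V' (n - s) ⟨hV'.1, hV'.2.1, fun W hW => by rw [(self_comp hV').1 hW, hdimV']⟩ m (by
    rw [show n - (n - s) = s by omega]
    by_cases h0 : s = 0
    · simp [h0]
    · exact (Nat.mul_le_mul_left _ (hdel h0)).trans hm1)
  rw [degreeSum_irr hV'] at hcp
  obtain ⟨hpos, ⟨c, hc⟩, -⟩ := deg_pkg hV'
  rw [hviV', hdimV'] at hc
  obtain ⟨K, hK⟩ := chain_bd hV (n - dim n V - s) s (by omega) Q hQp hQP hQe
  have hdeg : degree n V ≤ (∏ i ∈ Finset.Icc (s + 1) (n - dim n V), partialDeg n V i) * degree n V' := by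
    apply choose_lim _ _ (K + c) (n - s)
    intro m
    refine (hK m).trans ?_
    rw [mul_assoc, ← add_assoc m K c]
    exact Nat.mul_le_mul_left _ (hc _)
  have hDelta : Delta n V s ≤ degree n V' := by
    rw [Delta]
    refine max_le ?_ (by exact_mod_cast hpos)
    refine div_le_of_le_mul₀ (by positivity) (by positivity) ?_
    rw [mul_comm]
    exact_mod_cast hdeg
  have hfin : (hilbert n V' m : ℝ) ≤ hilbert n V m := by
    rw [hb_eq, hb_eq, hviV']
    exact_mod_cast hb_ge hQP m fun f hf hfm => hQ.1.2 (hTspan f hf hfm)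
  have : (k : ℝ) < hilbert n V m := by
    refine hkm.trans_le (le_trans ?_ (hcp.trans hfin))
    gcongr
  exact_mod_cast this

end Paper
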